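/- Let (R, m) be a regular local ring of dimension n ≥ 1 containing a field, and let p be a prime ideal of R with ht_R(p) = n − 1. Then there is a short exact sequence 0 → H_p^{n−1}(R) → E_R(R/p) → E → 0 in which E_R(R/p) is the injective hull of R/p, the first map is the inclusion into the injective hull, and E is a nonzero direct sum of copies of E_R(R/m); in particular inj.dim_R(H_p^{n−1}(R)) = 1 and μ^1(t, H_p^{n−1}(R)) = 0 for every prime ideal t ≠ m. -/

import Mathlib

open CategoryTheory Opposite

noncomputable section

/-- Krull dimension of the support of a module. -/
def moduleSuppDim (R : Type) [CommRing R] (M : Type) [AddCommGroup M] [Module R M] :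
    WithBot ℕ∞ :=
  Order.krullDim (Module.support R M)

/-- `M` has injective dimension at most `n` (as `R`-module), characterized by
vanishing of `Ext^i(N, M)` for all `i > n`. -/
def injDimLE (R : Type) [CommRing R] (M : Type) [AddCommGroup M] [Module R M] (n : ℕ) : Prop :=
  ∀ (N : ModuleCat R) (i : ℕ), n < i →
    Subsingleton (((Ext R (ModuleCat R) i).obj (op N)).obj (ModuleCat.of R M))

/-- The injective dimension of `M` as an `R`-module, valued in `ℕ∞`. -/
def injDim (R : Type) [CommRing R] (M : Type) [AddCommGroup M] [Module R M] : ℕ∞ :=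
  sInf {n : ℕ∞ | ∃ m : ℕ, (m : ℕ∞) = n ∧ injDimLE R M m}

/-- The height of an ideal: the infimum of the heights of primes containing it. -/
def idealHeight (R : Type) [CommRing R] (I : Ideal R) : ℕ∞ :=
  sInf {h : ℕ∞ | ∃ p : PrimeSpectrum R, I ≤ p.asIdeal ∧ Order.height p = h}

/-- A regular local ring: a Noetherian local ring whose maximal ideal can be generated
by `dim R` elements. -/
def IsRegularLocal (R : Type) [CommRing R] [IsLocalRing R] : Prop :=
  IsNoetherianRing R ∧
    ∃ s : Finset R, Ideal.span (s : Set R) = IsLocalRing.maximalIdeal R ∧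
      (s.card : WithBot ℕ∞) = ringKrullDim R

/-- A ring contains a field if some subring of it is a field. -/
def ContainsField (R : Type) [CommRing R] : Prop :=
  ∃ k : Subring R, IsField k

/-- The underlying module of the `i`-th local cohomology of `R` with support in `I`. -/
abbrev LocalCohomologyMod (R : Type) [CommRing R] (I : Ideal R) (i : ℕ) : Type :=
  (localCohomology I i).obj (ModuleCat.of R R)

/-- The `j`-th Bass number `μ^j(p, M) = dim_{κ(p)} Ext^j_{R_p}(κ(p), M_p)` is nonzero,
expressed as nontriviality of the `Ext` module. -/
def BassNumberNonzero (R : Type) [CommRing R] (p : Ideal R) [p.IsPrime]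
    (M : Type) [AddCommGroup M] [Module R M] (j : ℕ) : Prop :=
  Nontrivial
    (((Ext (Localization.AtPrime p) (ModuleCat (Localization.AtPrime p)) j).obj
        (op (ModuleCat.of (Localization.AtPrime p)
          (IsLocalRing.ResidueField (Localization.AtPrime p))))).obj
      (ModuleCat.of (Localization.AtPrime p) (LocalizedModule p.primeCompl M)))


/-- `f : M →ₗ[R] E` presents `E` as an injective hull (injective envelope) of `M`:
`E` is injective, `f` is injective, and the image of `f` is an essential submodule of `E`. -/
def IsInjectiveHull (R : Type) [CommRing R] {M E : Type} [AddCommGroup M] [Module R M]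
    [AddCommGroup E] [Module R E] (f : M →ₗ[R] E) : Prop :=
  Module.Injective R E ∧ Function.Injective f ∧
    ∀ N : Submodule R E, N ≠ ⊥ → N ⊓ LinearMap.range f ≠ ⊥

end

/-
Put `d = n - 1`. Since `Ext^i(N, R) = 0` for finite `p`-power torsion `N` and `i < d`, the functor
`N ↦ Ext^d(N, R)` on `p`-power torsion modules is represented by `H = H_p^d(R)`, with a universal
class in `Ext^d(H, R)`. The injective dimension of `R` and this universal property control `H`
without the Hartshorne–Lichtenbaum theorem: an element outside `p` acts injectively on `H`, so `H`
embeds in `H_p`; both `H_p` and `H_p / H` satisfy Baer's criterion, tested on quotients by powers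
and symbolic powers of `p`; and `H_p / H` is `m`-power torsion. Comparing lengths of `Hom(N, H)` and
`Ext^n(N / a N, R)` shows that `Hom(R / p, H)` is nonzero and that any nonzero `R / p → H` is an
essential embedding. Hence `H_p = E(R / p)`, and `H_p / H` is an injective `m`-power torsion module,
that is, a direct sum of copies of `E(R / m)`; it is nonzero because `H` is not injective.
-/

noncomputable section

open IsLocalRing RingTheory.Sequence

universe u

section Completion

variable {R S : Type*} [CommRing R] [CommRing S]

/-- The ring homomorphism `Ŝ → R̂` of adic completions induced by `f : S → R` with `f J ⊆ I`. -/
def adicCompletionMap {J : Ideal S} {I : Ideal R} (f : S →+* R) (h : J ≤ I.comap f) :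
    AdicCompletion J S →+* AdicCompletion I R :=
  AdicCompletion.liftRingHom I
    (fun n ↦ (Ideal.quotientMap (I ^ n) f
      ((Ideal.pow_right_mono h n).trans (Ideal.le_comap_pow f n))).comp
        (AdicCompletion.evalₐ J n : AdicCompletion J S →+* S ⧸ J ^ n))
    (fun {m n} hle ↦ by
      ext x
      obtain ⟨x, rfl⟩ := AdicCompletion.mk_surjective J S x
      have hx : Ideal.Quotient.mk (J ^ m) (x n) = Ideal.Quotient.mk (J ^ m) (x m) :=
        (AdicCompletion.Ideal.mk_eq_mk J hle x)
      simpa using congr(Ideal.quotientMap (I ^ m) f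
        ((Ideal.pow_right_mono h m).trans (Ideal.le_comap_pow f m)) $hx))

theorem adicCompletionMap_algebraMap {J : Ideal S} {I : Ideal R} (f : S →+* R)
    (h : J ≤ I.comap f) (s : S) :
    adicCompletionMap f h (algebraMap S _ s) = algebraMap R _ (f s) :=
  AdicCompletion.ext_evalₐ fun _ ↦ rfl

theorem adicCompletionMap_surjective {J : Ideal S} {f : S →+* R} (hJ : J.FG)
    (hf : Function.Surjective f) :
    Function.Surjective (adicCompletionMap (I := J.map f) f Ideal.le_comap_map) := by
  set F := adicCompletionMap (I := J.map f) f Ideal.le_comap_map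
  have hmap : (J.map (algebraMap S (AdicCompletion J S))).map F =
      (J.map f).map (algebraMap R (AdicCompletion (J.map f) R)) := by
    simp only [Ideal.map_map]
    exact congrArg (Ideal.map · J)
      (RingHom.ext (adicCompletionMap_algebraMap f Ideal.le_comap_map))
  have := AdicCompletion.isAdicComplete_self J hJ
  have : IsHausdorff ((J.map (algebraMap S (AdicCompletion J S))).map F)
      (AdicCompletion (J.map f) R) :=
    hmap ▸ (AdicCompletion.isAdicComplete_self _ (hJ.map f)).toIsHausdorff
  refine surjective_of_mk_map_comp_surjective (I := J.map (algebraMap S _)) F fun y ↦ ?_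
  obtain ⟨y, rfl⟩ := Ideal.Quotient.mk_surjective y
  obtain ⟨r, hr⟩ := Ideal.Quotient.mk_surjective (AdicCompletion.evalOneₐ (J.map f) y)
  obtain ⟨s, rfl⟩ := hf r
  refine ⟨algebraMap S _ s, Ideal.Quotient.eq.mpr ?_⟩
  rw [adicCompletionMap_algebraMap, hmap, ← AdicCompletion.ker_evalOneₐ_eq_map _ (hJ.map f)]
  exact (map_sub _ _ _).trans (sub_eq_zero.mpr hr)

instance isNoetherianRing_adicCompletion [IsNoetherianRing R] (I : Ideal R) :
    IsNoetherianRing (AdicCompletion I R) := by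
  obtain ⟨n, x, rfl⟩ :=
    Submodule.fg_iff_exists_fin_generating_family.mp (IsNoetherian.noetherian I)
  have hx : (MvPolynomial.idealOfVars (Fin n) R).map (MvPolynomial.eval x) =
      Submodule.span R (Set.range x) := by
    rw [MvPolynomial.idealOfVars, Ideal.map_span, ← Set.range_comp]
    simp [Function.comp_def, Ideal.span]
  have : IsNoetherianRing (AdicCompletion (MvPolynomial.idealOfVars (Fin n) R)
      (MvPolynomial (Fin n) R)) :=
    isNoetherianRing_of_ringEquiv _ (MvPowerSeries.toAdicCompletionAlgEquiv (Fin n) R).toRingEquiv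
  rw [← hx]
  exact isNoetherianRing_of_surjective _ _ _ (adicCompletionMap_surjective
    (MvPolynomial.idealOfVars_fg (Fin n) R) fun r ↦ ⟨MvPolynomial.C r, by simp⟩)

end Completion

section RegularLocalRing

variable {S : Type*} [CommRing S]

theorem exists_span_insert_erase_eq_maximalIdeal [IsLocalRing S] [DecidableEq S] {s : Finset S}
    (hs : Ideal.span (s : Set S) = maximalIdeal S) {x : S} (hx : x ∈ maximalIdeal S)
    (hx2 : x ∉ maximalIdeal S ^ 2) :
    ∃ y ∈ s, Ideal.span (insert x (s.erase y) : Set S) = maximalIdeal S := by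
  obtain ⟨c, -, hc⟩ := Submodule.mem_span_finset.mp (hs.ge hx)
  have hs_le : ∀ z ∈ s, z ∈ maximalIdeal S := fun z hz ↦ hs ▸ Ideal.subset_span hz
  obtain ⟨y, hy, hcy⟩ : ∃ y ∈ s, c y ∉ maximalIdeal S := by
    by_contra! hcon
    exact hx2 (hc ▸ pow_two (maximalIdeal S) ▸
      Ideal.sum_mem _ fun y hy ↦ Ideal.mul_mem_mul (hcon y hy) (hs_le y hy))
  refine ⟨y, hy, le_antisymm ?_ ?_⟩
  · rw [Ideal.span_le, Set.insert_subset_iff]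
    exact ⟨hx, fun z hz ↦ hs_le z (Finset.mem_of_mem_erase hz)⟩
  · rw [← hs, Ideal.span_le]
    intro z hz
    by_cases hzy : z = y
    · subst z
      refine (Ideal.unit_mul_mem_iff_mem _ (notMem_maximalIdeal.mp hcy)).mp ?_
      have hcy_eq : c y * y = x - ∑ i ∈ s.erase y, c i • i := by
        rw [← hc, ← Finset.add_sum_erase s _ hy, smul_eq_mul, add_sub_cancel_right]
      rw [hcy_eq]
      refine Ideal.sub_mem _ (Ideal.subset_span (Set.mem_insert _ _))
        (Ideal.sum_mem _ fun i hi ↦ ?_)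
      exact Ideal.mul_mem_left _ _ (Ideal.subset_span (Set.mem_insert_of_mem _ hi))
    · exact Ideal.subset_span (Set.mem_insert_of_mem _ (Finset.mem_erase.mpr ⟨hzy, hz⟩))

theorem spanFinrank_maximalIdeal_quotient_span_singleton_lt [IsLocalRing S] [IsNoetherianRing S]
    {x : S} [IsLocalRing (S ⧸ Ideal.span {x})] (hx : x ∈ maximalIdeal S)
    (hx2 : x ∉ maximalIdeal S ^ 2) :
    (maximalIdeal (S ⧸ Ideal.span {x})).spanFinrank < (maximalIdeal S).spanFinrank := by
  classical
  obtain ⟨s, hcard, hs⟩ :=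
    (IsNoetherian.noetherian (maximalIdeal S)).exists_span_finset_card_eq_spanFinrank
  obtain ⟨y, hy, hspan⟩ := exists_span_insert_erase_eq_maximalIdeal hs hx hx2
  have hmk : maximalIdeal (S ⧸ Ideal.span {x}) = Submodule.span (S ⧸ Ideal.span {x})
      ((s.erase y).image (Ideal.Quotient.mk (Ideal.span {x})) : Set (S ⧸ Ideal.span {x})) := by
    rw [← map_maximalIdeal_of_surjective _ Ideal.Quotient.mk_surjective, ← hspan, Ideal.map_span,
      Set.image_insert_eq, Ideal.Quotient.eq_zero_iff_mem.mpr (Ideal.mem_span_singleton_self x),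
      Finset.coe_image]
    exact Submodule.span_insert_zero
  calc _ ≤ ((s.erase y).image (Ideal.Quotient.mk (Ideal.span {x}))).card := by
          rw [hmk, ← Set.ncard_coe_finset]
          exact Submodule.spanFinrank_span_le_ncard_of_finite (Finset.finite_toSet _)
    _ ≤ (s.erase y).card := Finset.card_image_le
    _ < s.card := Finset.card_erase_lt_of_mem hy
    _ = _ := hcard

instance isLocalRing_quotient_span_singleton [IsLocalRing S] (x : maximalIdeal S) :
    IsLocalRing (S ⧸ Ideal.span {x.1}) :=
  have : Nontrivial (S ⧸ Ideal.span {x.1}) := Ideal.Quotient.nontrivial_iff.mpr fun h ↦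
    (mem_maximalIdeal _).mp x.2 (Ideal.span_singleton_eq_top.mp h)
  .of_surjective' _ Ideal.Quotient.mk_surjective

theorem isRegularLocalRing_quotient_span_singleton [IsRegularLocalRing S] {x : S}
    (hx : x ∈ maximalIdeal S) (hx2 : x ∉ maximalIdeal S ^ 2) :
    IsRegularLocalRing (S ⧸ Ideal.span {x}) := by
  have : IsLocalRing (S ⧸ Ideal.span {x}) := isLocalRing_quotient_span_singleton ⟨x, hx⟩
  have hlt := spanFinrank_maximalIdeal_quotient_span_singleton_lt hx hx2
  have hdim := ringKrullDim_le_ringKrullDim_quotient_add_card (R := S) (s := {x})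
    (by simpa [ringJacobson_eq_maximalIdeal] using hx)
  rw [← IsRegularLocalRing.spanFinrank_maximalIdeal, Finset.coe_singleton, Finset.card_singleton,
    Nat.cast_one] at hdim
  refine .of_spanFinrank_maximalIdeal_le _ (ENat.WithBot.add_le_add_one_right_iff.mp ?_)
  exact le_trans (by exact_mod_cast hlt) hdim

theorem maximalIdeal_eq_bot_of_le_sq [IsLocalRing S] [IsNoetherianRing S]
    (h : maximalIdeal S ≤ maximalIdeal S ^ 2) : maximalIdeal S = ⊥ :=
  Submodule.eq_bot_of_le_smul_of_le_jacobson_bot _ _ (IsNoetherian.noetherian _)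
    (h.trans_eq (pow_two _)) (maximalIdeal_le_jacobson _)

theorem exists_mem_maximalIdeal_notMem_minimalPrimes [IsLocalRing S] [IsNoetherianRing S]
    (h : 0 < ringKrullDim S) :
    ∃ x ∈ maximalIdeal S, x ∉ maximalIdeal S ^ 2 ∧ ∀ P ∈ minimalPrimes S, x ∉ P := by
  by_contra! hcon
  have hcover : (maximalIdeal S : Set S) ⊆
      ⋃ I ∈ insert (maximalIdeal S ^ 2) (minimalPrimes S), (I : Set S) := fun x hx ↦ by
    rw [Set.biUnion_insert, Set.mem_union, or_iff_not_imp_left]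
    exact fun hx2 ↦ by simpa using hcon x hx hx2
  obtain ⟨I, rfl | hI, hle⟩ := (Ideal.subset_union_prime_finite (f := fun I ↦ I)
    ((minimalPrimes.finite_of_isNoetherianRing S).insert _) (maximalIdeal S ^ 2)
    (maximalIdeal S ^ 2) fun I hI hne _ ↦
      ((Set.mem_insert_iff.mp hI).resolve_left hne).1.1).mp hcover
  · rw [ringKrullDim_eq_zero_of_isField
      (isField_iff_maximalIdeal_eq.mpr (maximalIdeal_eq_bot_of_le_sq hle))] at h
    exact h.false
  · have hmin : maximalIdeal S ∈ minimalPrimes S :=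
      le_antisymm hle (le_maximalIdeal hI.1.1.ne_top) ▸ hI
    rw [← maximalIdeal_height_eq_ringKrullDim, Ideal.height_eq_zero_iff.mpr hmin] at h
    exact h.false

theorem isDomain_of_isPrime_span_singleton [IsLocalRing S] [IsNoetherianRing S] {x : S}
    (hx : x ∈ maximalIdeal S) (hprime : (Ideal.span {x}).IsPrime)
    (hmin : ∀ P ∈ minimalPrimes S, x ∉ P) : IsDomain S := by
  obtain ⟨P, hP, hPx⟩ := Ideal.exists_minimalPrimes_le (bot_le (a := Ideal.span {x}))
  have := hP.1.1
  have hPmul : P ≤ maximalIdeal S • P := fun z hz ↦ by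
    obtain ⟨w, rfl⟩ := Ideal.mem_span_singleton'.mp (hPx hz)
    exact mul_comm w x ▸
      Ideal.mul_mem_mul hx ((this.mem_or_mem hz).resolve_right (hmin P hP))
  obtain rfl := Submodule.eq_bot_of_le_smul_of_le_jacobson_bot _ _ (IsNoetherian.noetherian P)
    hPmul (maximalIdeal_le_jacobson _)
  exact IsDomain.of_bot_isPrime S

theorem isDomain_of_isRegularLocalRing (S : Type*) [CommRing S] [IsRegularLocalRing S] :
    IsDomain S := by
  induction hn : (maximalIdeal S).spanFinrank using Nat.strong_induction_on generalizing S with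
  | _ n ih =>
    obtain rfl | hpos := n.eq_zero_or_pos
    · rw [Submodule.spanFinrank_eq_zero_iff_eq_bot (IsNoetherian.noetherian _)] at hn
      exact (isField_iff_maximalIdeal_eq.mpr hn).isDomain
    obtain ⟨x, hx, hx2, hmin⟩ := exists_mem_maximalIdeal_notMem_minimalPrimes (S := S) (by
      rw [← IsRegularLocalRing.spanFinrank_maximalIdeal, hn]
      exact_mod_cast hpos)
    have := isRegularLocalRing_quotient_span_singleton hx hx2
    have := ih _ (hn ▸ spanFinrank_maximalIdeal_quotient_span_singleton_lt hx hx2) _ rfl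
    exact isDomain_of_isPrime_span_singleton hx
      ((Ideal.Quotient.isDomain_iff_prime _).mp this) hmin

theorem exists_isRegular_ofList_eq_maximalIdeal (S : Type*) [CommRing S] [IsRegularLocalRing S] :
    ∃ rs : List S, IsRegular S rs ∧ Ideal.ofList rs = maximalIdeal S := by
  induction hn : (maximalIdeal S).spanFinrank using Nat.strong_induction_on generalizing S with
  | _ n ih =>
    have := isDomain_of_isRegularLocalRing S
    by_cases hle : maximalIdeal S ≤ maximalIdeal S ^ 2
    · exact ⟨[], .nil S S, by rw [maximalIdeal_eq_bot_of_le_sq hle, Ideal.ofList_nil]⟩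
    obtain ⟨x, hx, hx2⟩ := SetLike.not_le_iff_exists.mp hle
    have := isRegularLocalRing_quotient_span_singleton hx hx2
    obtain ⟨rs, hrs, hspan⟩ :=
      ih _ (hn ▸ spanFinrank_maximalIdeal_quotient_span_singleton_lt hx hx2) _ rfl
    obtain ⟨rs, rfl⟩ := List.map_surjective_iff.mpr
      (Ideal.Quotient.mk_surjective (I := Ideal.span {x})) rs
    have hmax : Ideal.ofList (x :: rs) = maximalIdeal S := by
      rw [← Ideal.map_ofList] at hspan
      rw [Ideal.ofList_cons, ← Ideal.comap_map_quotientMk, hspan]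
      exact eq_maximalIdeal (Ideal.comap_isMaximal_of_surjective _ Ideal.Quotient.mk_surjective)
    have hx0 : x ≠ 0 := by
      rintro rfl
      exact hx2 (zero_mem _)
    have hrs' : IsWeaklyRegular (QuotSMulTop x S) rs := by
      refine (LinearEquiv.isWeaklyRegular_congr (Submodule.quotEquivOfEq _ _ ?_) rs).mp
        ((isWeaklyRegular_map_algebraMap_iff (S ⧸ Ideal.span {x}) (S ⧸ Ideal.span {x}) rs).mp hrs.1)
      rw [← Submodule.ideal_span_singleton_smul, smul_eq_mul, Ideal.mul_top]
    exact ⟨x :: rs, .of_isWeaklyRegular_of_mem_maximalIdeal S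
      (fun r hr ↦ hmax ▸ Ideal.subset_span hr)
      ((isWeaklyRegular_cons_iff S x rs).mpr ⟨.of_ne_zero hx0, hrs'⟩), hmax⟩

theorem isRegularLocalRing_of_isRegular [IsLocalRing S] [IsNoetherianRing S] {rs : List S}
    (hrs : IsRegular S rs) (hspan : Ideal.ofList rs = maximalIdeal S) : IsRegularLocalRing S := by
  have hdim : ringKrullDim (S ⧸ maximalIdeal S) = 0 :=
    ringKrullDim_eq_zero_of_isField
      ((Ideal.Quotient.maximal_ideal_iff_isField_quotient _).mp inferInstance)
  refine .of_spanFinrank_maximalIdeal_le _ ?_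
  rw [← ringKrullDim_add_length_eq_ringKrullDim_of_isRegular rs hrs, hspan, hdim, zero_add]
  classical
  calc ((maximalIdeal S).spanFinrank : WithBot ℕ∞) ≤ (rs.toFinset.card : ℕ) := by
        rw [← hspan, Ideal.ofList, ← List.coe_toFinset, ← Set.ncard_coe_finset]
        exact_mod_cast Submodule.spanFinrank_span_le_ncard_of_finite rs.toFinset.finite_toSet
    _ ≤ rs.length := by exact_mod_cast rs.toFinset_card_le

instance isRegularLocalRing_adicCompletion [IsRegularLocalRing S] :
    IsRegularLocalRing (AdicCompletion (maximalIdeal S) S) := by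
  obtain ⟨rs, hrs, hspan⟩ := exists_isRegular_ofList_eq_maximalIdeal S
  have : Module.FaithfullyFlat S (AdicCompletion (maximalIdeal S) S) := .of_flat_of_isLocalHom
  refine isRegularLocalRing_of_isRegular hrs.of_faithfullyFlat ?_
  rw [← Ideal.map_ofList, hspan, AdicCompletion.maximalIdeal_eq_map]

end RegularLocalRing

section SymbolicPower

variable {R : Type*} [CommRing R]

theorem sub_algebraMap_mem_map_pow {I : Ideal R} (hI : I.FG) {x : AdicCompletion I R} {n : ℕ}
    {r : R} (h : AdicCompletion.eval I R n x = Submodule.Quotient.mk r) :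
    x - algebraMap R _ r ∈ (I ^ n).map (algebraMap R (AdicCompletion I R)) := by
  have hker : x - algebraMap R _ r ∈ LinearMap.ker (AdicCompletion.eval I R n) :=
    LinearMap.sub_mem_ker_iff.mpr h
  rwa [← AdicCompletion.pow_smul_top_eq_ker_eval hI, Ideal.smul_top_eq_map] at hker

theorem iInf_sup_maximalIdeal_pow [IsLocalRing R] [IsNoetherianRing R] (I : Ideal R) :
    ⨅ k, I ⊔ maximalIdeal R ^ k = I := by
  refine le_antisymm (fun x hx ↦ ?_) (le_iInf fun _ ↦ le_sup_left)
  refine Ideal.Quotient.eq_zero_iff_mem.mp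
    ((inferInstance : IsHausdorff (maximalIdeal R) (R ⧸ I)).haus _ fun k ↦ ?_)
  obtain ⟨y, hy, z, hz, rfl⟩ := Submodule.mem_sup.mp (Ideal.mem_iInf.mp hx k)
  rw [SModEq.zero, map_add, Ideal.Quotient.eq_zero_iff_mem.mpr hy, zero_add]
  exact Ideal.smul_top_eq_map (S := R ⧸ I) (maximalIdeal R ^ k) ▸ Ideal.mem_map_of_mem _ hz

theorem exists_sup_maximalIdeal_pow_eq_iInf [IsLocalRing R] [IsNoetherianRing R] {Q : ℕ → Ideal R}
    (hQ : Antitone Q) (k : ℕ) :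
    ∃ s, Q s ⊔ maximalIdeal R ^ k = ⨅ t, Q t ⊔ maximalIdeal R ^ k := by
  obtain rfl | hk := eq_or_ne k 0
  · exact ⟨0, by simp⟩
  have : IsArtinianRing (R ⧸ maximalIdeal R ^ k) :=
    quotient_artinian_of_mem_minimalPrimes_of_isLocalRing _
      ⟨⟨inferInstance, Ideal.pow_le_self hk⟩, fun _ hJ _ ↦ hJ.1.le_of_pow_le hJ.2⟩
  have hcomap (t : ℕ) : ((Q t).map (Ideal.Quotient.mk (maximalIdeal R ^ k))).comap
      (Ideal.Quotient.mk _) = Q t ⊔ maximalIdeal R ^ k := by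
    rw [Ideal.comap_map_quotientMk, sup_comm]
  obtain ⟨s, hs⟩ := IsArtinian.monotone_stabilizes
    ⟨fun t ↦ OrderDual.toDual ((Q t).map (Ideal.Quotient.mk (maximalIdeal R ^ k))),
      fun _ _ hst ↦ Ideal.map_mono (hQ hst)⟩
  refine ⟨s, le_antisymm (le_iInf fun t ↦ ?_) (iInf_le _ s)⟩
  obtain hst | hts := le_total s t
  · rw [← hcomap, ← hcomap]
    exact (congrArg (Ideal.comap _) (hs t hst : (Q s).map _ = (Q t).map _)).le
  · exact sup_le_sup_right (hQ hts) _

theorem exists_mem_iInf_sup_pow_succ [IsLocalRing R] [IsNoetherianRing R] {Q : ℕ → Ideal R}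
    (hQ : Antitone Q) {k : ℕ} {x : R} (hx : x ∈ ⨅ t, Q t ⊔ maximalIdeal R ^ k) :
    ∃ y ∈ ⨅ t, Q t ⊔ maximalIdeal R ^ (k + 1), y - x ∈ maximalIdeal R ^ k := by
  obtain ⟨s, hs⟩ := exists_sup_maximalIdeal_pow_eq_iInf hQ (k + 1)
  obtain ⟨y, hy, z, hz, rfl⟩ := Submodule.mem_sup.mp (Ideal.mem_iInf.mp hx s)
  exact ⟨y, hs ▸ Ideal.mem_sup_left hy, by simpa using hz⟩

/- Chevalley's argument: otherwise some sequence `x_j ∈ ⨅ t, Q t + m ^ (k + j)` outside `m ^ k`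
converges in the completion, to a nonzero element of the intersection. -/
theorem exists_le_maximalIdeal_pow_of_iInf_map_eq_bot [IsLocalRing R] [IsNoetherianRing R]
    {Q : ℕ → Ideal R} (hQ : Antitone Q)
    (h : ⨅ t, (Q t).map (algebraMap R (AdicCompletion (maximalIdeal R) R)) = ⊥) (k : ℕ) :
    ∃ t, Q t ≤ maximalIdeal R ^ k := by
  by_contra! hcon
  set m := maximalIdeal R
  let W (j : ℕ) : Set R := {x | x ∈ ⨅ t, Q t ⊔ m ^ (k + j) ∧ x ∉ m ^ k}
  obtain ⟨x₀, hx₀⟩ : (W 0).Nonempty := by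
    obtain ⟨s, hs⟩ := exists_sup_maximalIdeal_pow_eq_iInf hQ k
    obtain ⟨x, hxs, hxk⟩ := SetLike.not_le_iff_exists.mp (hcon s)
    exact ⟨x, hs ▸ Ideal.mem_sup_left hxs, hxk⟩
  have hnext (j : ℕ) (x : W j) : ∃ y : W (j + 1), y.1 - x.1 ∈ m ^ (k + j) := by
    obtain ⟨y, hy, hyx⟩ := exists_mem_iInf_sup_pow_succ hQ x.2.1
    have hyx' := Ideal.pow_le_pow_right (Nat.le_add_right k j) hyx
    exact ⟨⟨y, hy, fun hyk ↦ x.2.2 ((Submodule.sub_mem_iff_right _ hyk).mp hyx')⟩, hyx⟩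
  choose next hnext using hnext
  let f (j : ℕ) : W j := Nat.rec ⟨x₀, hx₀⟩ next j
  let F : AdicCompletion m R := AdicCompletion.mk m R <| .mk m R (fun j ↦ (f j).1) fun j ↦ by
    refine (SModEq.sub_mem.mpr ?_).symm
    rw [smul_eq_mul, Ideal.mul_top]
    exact Ideal.pow_le_pow_right (Nat.le_add_left j k) (hnext j (f j))
  have hF0 : F = 0 := by
    rw [← Ideal.mem_bot, ← h, Ideal.mem_iInf]
    intro t
    rw [← iInf_sup_maximalIdeal_pow ((Q t).map _), Ideal.mem_iInf]
    intro j
    have hfj : (f j).1 ∈ Q t ⊔ m ^ j :=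
      (sup_le_sup_left (Ideal.pow_le_pow_right (Nat.le_add_left j k)) (Q t) :
        Q t ⊔ m ^ (k + j) ≤ _) (Ideal.mem_iInf.mp (f j).2.1 t)
    have hFj : F - algebraMap R _ (f j).1 ∈ (m ^ j).map (algebraMap R (AdicCompletion m R)) :=
      sub_algebraMap_mem_map_pow (IsNoetherian.noetherian m) rfl
    rw [AdicCompletion.maximalIdeal_eq_map, ← Ideal.map_pow, ← Ideal.map_sup]
    exact (Submodule.sub_mem_iff_left _ (Ideal.mem_map_of_mem _ hfj)).mp
      (Ideal.map_mono le_sup_right hFj)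
  have hFk : Submodule.Quotient.mk (p := m ^ k • ⊤) (f k).1 = 0 :=
    congr(AdicCompletion.eval m R k $hF0)
  rw [Submodule.Quotient.mk_eq_zero, smul_eq_mul, Ideal.mul_top] at hFk
  exact (f k).2.2 hFk

/-- The symbolic power `p⁽ᵗ⁾ = pᵗ R_p ∩ R`. -/
def symbolicPower (p : Ideal R) [p.IsPrime] (t : ℕ) : Ideal R :=
  ((p ^ t).map (algebraMap R (Localization.AtPrime p))).comap (algebraMap R _)

theorem mem_symbolicPower_iff {p : Ideal R} [p.IsPrime] {t : ℕ} {x : R} :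
    x ∈ symbolicPower p t ↔ ∃ s ∉ p, s * x ∈ p ^ t := by
  rw [symbolicPower, Ideal.mem_comap, IsLocalization.algebraMap_mem_map_algebraMap_iff p.primeCompl]
  rfl

theorem pow_le_symbolicPower (p : Ideal R) [p.IsPrime] (t : ℕ) :
    p ^ t ≤ symbolicPower p t := Ideal.le_comap_map

theorem isSMulRegular_quotient_symbolicPower {p : Ideal R} [p.IsPrime]
    {t : ℕ} {b : R} (hb : b ∉ p) : IsSMulRegular (R ⧸ symbolicPower p t) b := by
  refine isSMulRegular_iff_right_eq_zero_of_smul.mpr fun x hx ↦ ?_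
  obtain ⟨x, rfl⟩ := Submodule.mkQ_surjective _ x
  obtain ⟨s, hs, hsx⟩ := mem_symbolicPower_iff.mp ((Submodule.Quotient.mk_eq_zero _).mp hx)
  refine (Submodule.Quotient.mk_eq_zero _).mpr (mem_symbolicPower_iff.mpr ⟨s * b, ?_, ?_⟩)
  · exact fun h ↦ (‹p.IsPrime›.mem_or_mem h).elim hs hb
  · rwa [mul_assoc]

theorem symbolicPower_antitone (p : Ideal R) [p.IsPrime] : Antitone (symbolicPower p) :=
  fun _ _ h ↦ Ideal.comap_mono (Ideal.map_mono (Ideal.pow_le_pow_right h))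

theorem iInf_map_symbolicPower_eq_bot {T : Type*} [CommRing T] [IsNoetherianRing T] [IsDomain T]
    [Algebra R T] [Module.FaithfullyFlat R T] (p : Ideal R) [p.IsPrime] :
    ⨅ t, (symbolicPower p t).map (algebraMap R T) = ⊥ := by
  obtain ⟨q, hq, hqp⟩ := Ideal.exists_isPrime_liesOver_of_faithfullyFlat (B := T) p
  have hle (t : ℕ) : (symbolicPower p t).map (algebraMap R T) ≤
      (maximalIdeal (Localization.AtPrime q) ^ t).comap (algebraMap T _) := by
    rw [Ideal.map_le_iff_le_comap]
    intro x hx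
    obtain ⟨s, hs, hsx⟩ := mem_symbolicPower_iff.mp hx
    have hsq : algebraMap R T s ∉ q := fun h ↦ hs (by rwa [hqp.over])
    have hpq : (p ^ t).map (algebraMap R T) ≤ q ^ t := by
      rw [Ideal.map_pow]
      exact Ideal.pow_right_mono (Ideal.map_le_iff_le_comap.mpr hqp.over.le) t
    have hmem := Ideal.mem_map_of_mem (algebraMap T (Localization.AtPrime q))
      (hpq (Ideal.mem_map_of_mem _ hsx))
    rw [Ideal.map_pow, Localization.AtPrime.map_eq_maximalIdeal, map_mul, map_mul] at hmem
    exact (Ideal.unit_mul_mem_iff_mem (maximalIdeal (Localization.AtPrime q) ^ t)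
      (IsLocalization.map_units (M := q.primeCompl) _ ⟨_, hsq⟩)).mp hmem
  rw [eq_bot_iff]
  refine (iInf_mono hle).trans ?_
  rw [← Ideal.comap_iInf, Ideal.iInf_pow_eq_bot_of_isLocalRing _ (maximalIdeal.isMaximal _).ne_top,
    ← RingHom.ker_eq_comap_bot, (RingHom.injective_iff_ker_eq_bot _).mp
      (IsLocalization.injective _ q.primeCompl_le_nonZeroDivisors)]

theorem exists_symbolicPower_le_maximalIdeal_pow [IsRegularLocalRing R] (p : Ideal R) [p.IsPrime]
    (k : ℕ) : ∃ t, symbolicPower p t ≤ maximalIdeal R ^ k := by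
  have : Module.FaithfullyFlat R (AdicCompletion (maximalIdeal R) R) := .of_flat_of_isLocalHom
  have := isDomain_of_isRegularLocalRing (AdicCompletion (maximalIdeal R) R)
  exact exists_le_maximalIdeal_pow_of_iInf_map_eq_bot (symbolicPower_antitone p)
    (iInf_map_symbolicPower_eq_bot p) k

end SymbolicPower

section ExtOf

/-- The module `Ext^i_R(M, Y)`, for unbundled modules. -/
abbrev ExtOf (R : Type u) [CommRing R] (M Y : Type u) [AddCommGroup M] [Module R M]
    [AddCommGroup Y] [Module R Y] (i : ℕ) : Type u :=
  Abelian.Ext (ModuleCat.of R M) (ModuleCat.of R Y) i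

namespace ExtOf

open Abelian.Ext

variable {R : Type u} [CommRing R] {M N P Y Y' : Type u} [AddCommGroup M] [Module R M]
  [AddCommGroup N] [Module R N] [AddCommGroup P] [Module R P]
  [AddCommGroup Y] [Module R Y] [AddCommGroup Y'] [Module R Y']

variable (Y) in
/-- The map `Ext^i(N, Y) → Ext^i(M, Y)` induced by `f : M → N`. -/
def precomp (f : M →ₗ[R] N) (i : ℕ) : ExtOf R N Y i →ₗ[R] ExtOf R M Y i :=
  (mk₀ (ModuleCat.ofHom f)).precompOfLinear R _ (zero_add i)

variable (M) in
/-- The map `Ext^i(M, Y) → Ext^i(M, Y')` induced by `f : Y → Y'`. -/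
def postcomp (f : Y →ₗ[R] Y') (i : ℕ) : ExtOf R M Y i →ₗ[R] ExtOf R M Y' i :=
  (mk₀ (ModuleCat.ofHom f)).postcompOfLinear R _ (add_zero i)

variable (M Y) in
/-- The identification of `Hom(M, Y)` with `Ext^0(M, Y)`. -/
def ofHom : (M →ₗ[R] Y) ≃ₗ[R] ExtOf R M Y 0 :=
  (linearEquiv₀ ≪≫ₗ ModuleCat.homLinearEquiv (S := R)).symm

theorem precomp_apply (f : M →ₗ[R] N) {i : ℕ} (x : ExtOf R N Y i) :
    precomp Y f i x = (mk₀ (ModuleCat.ofHom f)).comp x (zero_add i) := rfl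

theorem precomp_id {i : ℕ} (x : ExtOf R N Y i) :
    precomp Y (LinearMap.id : N →ₗ[R] N) i x = x :=
  mk₀_id_comp _

theorem precomp_comp (f : M →ₗ[R] N) (g : N →ₗ[R] P) {i : ℕ} (x : ExtOf R P Y i) :
    precomp Y (g ∘ₗ f) i x = precomp Y f i (precomp Y g i x) := by
  rw [precomp_apply, precomp_apply, precomp_apply, ModuleCat.ofHom_comp, mk₀_comp_mk₀_assoc]

theorem precomp_add (f g : M →ₗ[R] N) {i : ℕ} (x : ExtOf R N Y i) :
    precomp Y (f + g) i x = precomp Y f i x + precomp Y g i x := by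
  rw [precomp_apply, precomp_apply, precomp_apply, ModuleCat.ofHom_add, mk₀_add, add_comp]

theorem precomp_smul (f : M →ₗ[R] N) (r : R) {i : ℕ} (x : ExtOf R N Y i) :
    precomp Y (r • f) i x = r • precomp Y f i x := by
  rw [precomp_apply, precomp_apply, ← smul_comp, ← mk₀_smul]
  rfl

theorem precomp_zero {i : ℕ} (x : ExtOf R N Y i) : precomp Y (0 : M →ₗ[R] N) i x = 0 := by
  simpa only [zero_smul] using precomp_smul (0 : M →ₗ[R] N) (0 : R) x

theorem precomp_lsmul (r : R) {i : ℕ} (x : ExtOf R N Y i) :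
    precomp Y (LinearMap.lsmul R N r) i x = r • x := by
  rw [show LinearMap.lsmul R N r = r • LinearMap.id from rfl, precomp_smul, precomp_id]

theorem precomp_ofHom (f : M →ₗ[R] N) (g : N →ₗ[R] Y) :
    precomp Y f 0 (ofHom N Y g) = ofHom M Y (g ∘ₗ f) :=
  mk₀_comp_mk₀ (ModuleCat.ofHom f) (ModuleCat.ofHom g)

theorem postcomp_id {i : ℕ} (x : ExtOf R M Y i) :
    postcomp M (LinearMap.id : Y →ₗ[R] Y) i x = x :=
  comp_mk₀_id _

theorem postcomp_comp {Z : Type u} [AddCommGroup Z] [Module R Z] (g : Y' →ₗ[R] Z)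
    (f : Y →ₗ[R] Y') {i : ℕ} (x : ExtOf R M Y i) :
    postcomp M (g ∘ₗ f) i x = postcomp M g i (postcomp M f i x) := by
  change x.comp (mk₀ (ModuleCat.ofHom (g ∘ₗ f))) (add_zero i) =
    (x.comp (mk₀ (ModuleCat.ofHom f)) (add_zero i)).comp (mk₀ (ModuleCat.ofHom g)) (add_zero i)
  rw [comp_assoc_of_third_deg_zero, mk₀_comp_mk₀, ModuleCat.ofHom_comp]

theorem postcomp_ofHom (g : Y →ₗ[R] Y') (f : M →ₗ[R] Y) :
    postcomp M g 0 (ofHom M Y f) = ofHom M Y' (g ∘ₗ f) :=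
  mk₀_comp_mk₀ (ModuleCat.ofHom f) (ModuleCat.ofHom g)

variable (Y) in
/-- The isomorphism `Ext^i(N, Y) ≃ Ext^i(M, Y)` induced by an isomorphism `M ≃ N`. -/
def congrLeft (e : M ≃ₗ[R] N) (i : ℕ) : ExtOf R N Y i ≃ₗ[R] ExtOf R M Y i :=
  LinearEquiv.ofLinearMap (precomp Y e.toLinearMap i) (precomp Y e.symm.toLinearMap i)
    (by ext x; simp [← precomp_comp, precomp_id])
    (by ext x; simp [← precomp_comp, precomp_id])

instance subsingleton_of_subsingleton_left [Subsingleton M] (i : ℕ) :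
    Subsingleton (ExtOf R M Y i) :=
  subsingleton_of_forall_eq 0 fun x ↦ by
    rw [← precomp_id x, Subsingleton.elim (LinearMap.id : M →ₗ[R] M) 0, precomp_zero]

theorem subsingleton_succ_of_projective [Module.Projective R M] (i : ℕ) :
    Subsingleton (ExtOf R M Y (i + 1)) :=
  subsingleton_of_forall_eq 0 fun x ↦ eq_zero_of_projective x

theorem subsingleton_succ_of_injective [Module.Injective R Y] (i : ℕ) :
    Subsingleton (ExtOf R M Y (i + 1)) :=
  have := (Module.injective_iff_injective_object R Y).mp inferInstance
  subsingleton_of_forall_eq 0 fun x ↦ eq_zero_of_injective x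

section LongExactSequence

variable {f : M →ₗ[R] N} {g : N →ₗ[R] P} (hf : Function.Injective f)
  (hg : Function.Surjective g) (hfg : Function.Exact f g)

include hf hg hfg

theorem shortExact :
    (ModuleCat.shortComplexOfCompEqZero f g hfg.linearMap_comp_eq_zero).ShortExact :=
  ModuleCat.shortComplex_shortExact _ hfg hf hg

/-- The class in `Ext^1(P, M)` of a short exact sequence `0 → M → N → P → 0`. -/
def extClass : ExtOf R P M 1 := (shortExact hf hg hfg).extClass

variable (Y) in
/-- The connecting map `Ext^i(M, Y) → Ext^{i+1}(P, Y)` of a short exact sequence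
`0 → M → N → P → 0`. -/
def connecting (i : ℕ) : ExtOf R M Y i →ₗ[R] ExtOf R P Y (i + 1) :=
  (extClass hf hg hfg).precompOfLinear R _ (add_comm 1 i)

theorem exact_precomp_precomp (i : ℕ) : Function.Exact (precomp Y g i) (precomp Y f i) := by
  refine fun x ↦ ⟨contravariant_sequence_exact₂ (shortExact hf hg hfg) _ x, ?_⟩
  rintro ⟨z, rfl⟩
  rw [← precomp_comp, hfg.linearMap_comp_eq_zero, precomp_zero]

theorem exact_precomp_connecting (i : ℕ) :
    Function.Exact (precomp Y f i) (connecting Y hf hg hfg i) := by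
  refine fun x ↦ ⟨contravariant_sequence_exact₁ (shortExact hf hg hfg) _ x (add_comm 1 i), ?_⟩
  rintro ⟨z, rfl⟩
  exact (shortExact hf hg hfg).extClass_comp_assoc z (h := add_comm 1 i)

theorem exact_connecting_precomp (i : ℕ) :
    Function.Exact (connecting Y hf hg hfg i) (precomp Y g (i + 1)) := by
  refine fun x ↦ ⟨fun hx ↦
    contravariant_sequence_exact₃ (shortExact hf hg hfg) _ x hx (add_comm 1 i), ?_⟩
  rintro ⟨z, rfl⟩
  exact (shortExact hf hg hfg).comp_extClass_assoc z (add_comm 1 i)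

theorem exact_postcomp_extClass (X : Type u) [AddCommGroup X] [Module R X] (i : ℕ) :
    Function.Exact (postcomp X g i)
      ((extClass hf hg hfg).postcompOfLinear R (ModuleCat.of R X) (rfl : i + 1 = i + 1)) := by
  refine fun x ↦ ⟨covariant_sequence_exact₃ _ (shortExact hf hg hfg) x rfl, ?_⟩
  rintro ⟨z, rfl⟩
  change (z.comp (mk₀ (ModuleCat.ofHom g)) (add_zero i)).comp (extClass hf hg hfg) rfl = 0
  have hgδ : (mk₀ (ModuleCat.ofHom g)).comp (extClass hf hg hfg) (zero_add 1) = 0 :=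
    (shortExact hf hg hfg).comp_extClass
  rw [comp_assoc (h := by lia) (h₂₃ := zero_add 1), hgδ, comp_zero]

theorem exact_extClass_postcomp (X : Type u) [AddCommGroup X] [Module R X] (i : ℕ) :
    Function.Exact
      ((extClass hf hg hfg).postcompOfLinear R (ModuleCat.of R X) (rfl : i + 1 = i + 1))
      (postcomp X f (i + 1)) := by
  refine fun x ↦ ⟨fun hx ↦ covariant_sequence_exact₁ _ (shortExact hf hg hfg) x hx rfl, ?_⟩
  rintro ⟨z, rfl⟩
  change (z.comp (extClass hf hg hfg) rfl).comp (mk₀ (ModuleCat.ofHom f)) (add_zero (i + 1)) = 0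
  have hδf : (extClass hf hg hfg).comp (mk₀ (ModuleCat.ofHom f)) (add_zero 1) = 0 :=
    (shortExact hf hg hfg).extClass_comp
  rw [comp_assoc (h := by lia) (h₂₃ := add_zero 1), hδf, comp_zero]

theorem precomp_injective {i : ℕ} (h : ∀ j, j + 1 = i → Subsingleton (ExtOf R M Y j)) :
    Function.Injective (precomp Y g i) := by
  cases i with
  | zero =>
    have : Epi (ModuleCat.ofHom g) := (ModuleCat.epi_iff_surjective _).mpr hg
    exact precomp_mk₀_injective_of_epi (ModuleCat.of R Y) (ModuleCat.ofHom g)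
  | succ j =>
    have := h j rfl
    refine (injective_iff_map_eq_zero _).mpr fun z hz ↦ ?_
    obtain ⟨y, rfl⟩ := (exact_connecting_precomp hf hg hfg j z).mp hz
    rw [Subsingleton.elim y 0, map_zero]

theorem precomp_surjective {i : ℕ} (_ : Subsingleton (ExtOf R P Y (i + 1))) :
    Function.Surjective (precomp Y f i) := fun z ↦
  (exact_precomp_connecting hf hg hfg i z).mp (Subsingleton.elim _ _)

theorem connecting_surjective {i : ℕ} (_ : Subsingleton (ExtOf R N Y (i + 1))) :
    Function.Surjective (connecting Y hf hg hfg i) := fun z ↦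
  (exact_connecting_precomp hf hg hfg i z).mp (Subsingleton.elim _ _)

theorem subsingleton_middle {i : ℕ} (_ : Subsingleton (ExtOf R M Y i))
    (_ : Subsingleton (ExtOf R P Y i)) : Subsingleton (ExtOf R N Y i) :=
  subsingleton_of_forall_eq 0 fun x ↦ by
    obtain ⟨y, rfl⟩ := (exact_precomp_precomp hf hg hfg i x).mp (Subsingleton.elim _ _)
    rw [Subsingleton.elim y 0, map_zero]

theorem subsingleton_right {i : ℕ} (hM : ∀ j, j + 1 = i → Subsingleton (ExtOf R M Y j))
    (_ : Subsingleton (ExtOf R N Y i)) : Subsingleton (ExtOf R P Y i) :=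
  (precomp_injective hf hg hfg hM).subsingleton

end LongExactSequence

end ExtOf

end ExtOf

section ResidueFieldExt

open scoped Pointwise

variable {R : Type u} [CommRing R] {M N Y : Type u} [AddCommGroup M] [Module R M]
  [AddCommGroup N] [Module R N] [AddCommGroup Y] [Module R Y]

/-- `Ext^•(M, Y)` is concentrated in degree `n`, where it is isomorphic to `M` itself. For
`Y = R` local and `M` its residue field this says that `R` is Gorenstein of dimension `n`. -/
structure IsExtSelfDual (R : Type u) [CommRing R] (M Y : Type u) [AddCommGroup M] [Module R M]
    [AddCommGroup Y] [Module R Y] (n : ℕ) : Prop where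
  subsingleton : ∀ i, i ≠ n → Subsingleton (ExtOf R M Y i)
  nonempty_equiv : Nonempty (ExtOf R M Y n ≃ₗ[R] M)

namespace IsExtSelfDual

variable {n : ℕ}

theorem congr (h : IsExtSelfDual R M Y n) (e : M ≃ₗ[R] N) : IsExtSelfDual R N Y n where
  subsingleton i hi :=
    have := h.subsingleton i hi
    (ExtOf.congrLeft Y e i).subsingleton
  nonempty_equiv := h.nonempty_equiv.map fun e' ↦ ExtOf.congrLeft Y e n ≪≫ₗ e' ≪≫ₗ e

theorem self (R : Type u) [CommRing R] : IsExtSelfDual R R R 0 where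
  subsingleton i hi := by
    obtain ⟨j, rfl⟩ := Nat.exists_eq_succ_of_ne_zero hi
    exact ExtOf.subsingleton_succ_of_projective j
  nonempty_equiv := ⟨(ExtOf.ofHom R R).symm ≪≫ₗ LinearMap.ringLmapEquivSelf R R R⟩

theorem quotSMulTop (h : IsExtSelfDual R M Y n) {x : R} (hx : IsSMulRegular M x) :
    IsExtSelfDual R (QuotSMulTop x M) Y (n + 1) := by
  set g := (x • (⊤ : Submodule R M)).mkQ
  have hg : Function.Surjective g := Submodule.mkQ_surjective _
  have hexact : Function.Exact (LinearMap.lsmul R M x) g :=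
    LinearMap.exact_lsmul_mkQ_smul_top M x
  have hx : Function.Injective (LinearMap.lsmul R M x) := hx
  obtain ⟨e⟩ := h.nonempty_equiv
  refine ⟨fun i hi ↦ ?_, ⟨?_⟩⟩
  · obtain rfl | hin := eq_or_ne i n
    · have hinj := ExtOf.precomp_injective (Y := Y) hx hg hexact fun j hj ↦
        h.subsingleton j (Nat.ne_of_lt (Nat.lt_of_succ_le hj.le))
      refine subsingleton_of_forall_eq 0 fun z ↦ hinj (e.injective (hx ?_))
      change x • e (ExtOf.precomp Y g i z) = x • e (ExtOf.precomp Y g i 0)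
      rw [← map_smul, ← ExtOf.precomp_lsmul,
        (ExtOf.exact_precomp_precomp hx hg hexact i).apply_apply_eq_zero, map_zero, map_zero,
        map_zero, smul_zero]
    · exact ExtOf.subsingleton_right hx hg hexact (fun j hj ↦ h.subsingleton j (by lia))
        (h.subsingleton i hin)
  · have hδ := ExtOf.connecting_surjective (Y := Y) hx hg hexact
      (h.subsingleton (n + 1) n.succ_ne_self)
    have hker : LinearMap.ker (ExtOf.connecting Y hx hg hexact n) =
        LinearMap.ker (g ∘ₗ e.toLinearMap) := by
      ext z
      rw [LinearMap.mem_ker, LinearMap.mem_ker, ExtOf.exact_precomp_connecting hx hg hexact n z,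
        LinearMap.comp_apply, LinearEquiv.coe_coe, hexact (e z)]
      refine ⟨?_, fun ⟨w, hw⟩ ↦ ⟨e.symm w, e.injective ?_⟩⟩
      · rintro ⟨w, rfl⟩
        exact ⟨e w, by simp [ExtOf.precomp_lsmul]⟩
      · simpa [ExtOf.precomp_lsmul] using hw
    exact ((ExtOf.connecting Y hx hg hexact n).quotKerEquivOfSurjective hδ).symm ≪≫ₗ
      Submodule.quotEquivOfEq _ _ hker ≪≫ₗ
      (g ∘ₗ e.toLinearMap).quotKerEquivOfSurjective (hg.comp e.surjective)

theorem quotient_ofList (h : IsExtSelfDual R M Y n) {rs : List R} (hrs : IsWeaklyRegular M rs) :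
    IsExtSelfDual R (M ⧸ (Ideal.ofList rs • ⊤ : Submodule R M)) Y (n + rs.length) := by
  induction rs generalizing M n with
  | nil => exact h.congr (Submodule.quotEquivOfEqBot _ (by simp)).symm
  | cons x rs ih =>
    obtain ⟨hx, hrs⟩ := (isWeaklyRegular_cons_iff M x rs).mp hrs
    rw [List.length_cons, add_comm rs.length, ← add_assoc]
    exact (ih (h.quotSMulTop hx) hrs).congr
      (Submodule.quotOfListConsSMulTopEquivQuotSMulTopInner M x rs).symm

end IsExtSelfDual

theorem isExtSelfDual_quotient_maximalIdeal [IsRegularLocalRing R] {n : ℕ}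
    (hn : ringKrullDim R = n) : IsExtSelfDual R (R ⧸ maximalIdeal R) R n := by
  obtain ⟨rs, hrs, hspan⟩ := exists_isRegular_ofList_eq_maximalIdeal R
  have hlength : rs.length = n := by
    have hdim := ringKrullDim_add_length_eq_ringKrullDim_of_isRegular rs hrs
    have hzero : ringKrullDim (R ⧸ maximalIdeal R) = 0 :=
      ringKrullDim_eq_zero_of_isField
        ((Ideal.Quotient.maximal_ideal_iff_isField_quotient _).mp inferInstance)
    rw [hspan, hzero, zero_add, hn] at hdim
    exact_mod_cast hdim
  have h := (IsExtSelfDual.self R).quotient_ofList hrs.toIsWeaklyRegular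
  rw [zero_add, hlength] at h
  exact h.congr (Submodule.quotEquivOfEq _ _ (by simp [hspan]))

theorem nonempty_linearEquiv_quotient_maximalIdeal [IsLocalRing R] (M : Type*) [AddCommGroup M]
    [Module R M] [IsSimpleModule R M] : Nonempty (M ≃ₗ[R] R ⧸ maximalIdeal R) := by
  obtain ⟨I, hI, ⟨e⟩⟩ := isSimpleModule_iff_quot_maximal.mp (inferInstance : IsSimpleModule R M)
  obtain rfl := IsLocalRing.eq_maximalIdeal hI
  exact ⟨e⟩

variable {n : ℕ}

theorem IsExtSelfDual.subsingleton_and_length_eq [IsLocalRing R]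
    (h : IsExtSelfDual R (R ⧸ maximalIdeal R) Y n) (hM : IsFiniteLength R M) :
    (∀ i, i ≠ n → Subsingleton (ExtOf R M Y i)) ∧
      Module.length R (ExtOf R M Y n) = Module.length R M := by
  induction hM with
  | of_subsingleton =>
    exact ⟨fun i _ ↦ inferInstance, by rw [Module.length_eq_zero, Module.length_eq_zero]⟩
  | @of_simple_quotient M _ _ N _ _ ih =>
    obtain ⟨e⟩ := nonempty_linearEquiv_quotient_maximalIdeal (R := R) (M ⧸ N)
    have hquot : IsExtSelfDual R (M ⧸ N) Y n := h.congr e.symm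
    obtain ⟨hvanish, hlength⟩ := ih
    have hf := N.injective_subtype
    have hg := N.mkQ_surjective
    have hfg := LinearMap.exact_subtype_mkQ N
    refine ⟨fun i hi ↦ ExtOf.subsingleton_middle hf hg hfg (hvanish i hi)
      (hquot.subsingleton i hi), ?_⟩
    rw [Module.length_eq_add_of_exact _ _
        (ExtOf.precomp_injective (Y := Y) hf hg hfg fun j hj ↦ hvanish j (by lia))
        (ExtOf.precomp_surjective hf hg hfg (hquot.subsingleton (n + 1) n.succ_ne_self))
        (ExtOf.exact_precomp_precomp hf hg hfg n),
      Module.length_eq_add_of_exact _ _ hf hg hfg, hlength, add_comm,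
      hquot.nonempty_equiv.some.length_eq]

theorem ext_subsingleton_of_isFiniteLength [IsRegularLocalRing R] (hn : ringKrullDim R = n)
    (hM : IsFiniteLength R M) {i : ℕ} (hi : i ≠ n) : Subsingleton (ExtOf R M R i) :=
  ((isExtSelfDual_quotient_maximalIdeal hn).subsingleton_and_length_eq hM).1 i hi

theorem length_ext_of_isFiniteLength [IsRegularLocalRing R] (hn : ringKrullDim R = n)
    (hM : IsFiniteLength R M) : Module.length R (ExtOf R M R n) = Module.length R M :=
  ((isExtSelfDual_quotient_maximalIdeal hn).subsingleton_and_length_eq hM).2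

end ResidueFieldExt

section PowerTorsion

variable {R : Type*} [CommRing R] {I : Ideal R} {M N : Type*} [AddCommGroup M] [Module R M]
  [AddCommGroup N] [Module R N]

theorem mem_primaryComponent_iff {x : M} :
    x ∈ I.primaryComponent M ↔ ∃ t : ℕ, ∀ r ∈ I ^ t, r • x = 0 := by
  simp [Ideal.primaryComponent_mem]

/-- Every element of `M` is annihilated by a power of `I`. -/
def IsPowerTorsion (I : Ideal R) (M : Type*) [AddCommGroup M] [Module R M] : Prop :=
  ∀ x : M, ∃ t : ℕ, ∀ r ∈ I ^ t, r • x = 0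

namespace IsPowerTorsion

theorem of_injective (hN : IsPowerTorsion I N) (f : M →ₗ[R] N) (hf : Function.Injective f) :
    IsPowerTorsion I M := fun x ↦
  (hN (f x)).imp fun _ ht r hr ↦ hf (by rw [map_smul, ht r hr, map_zero])

theorem of_surjective (hM : IsPowerTorsion I M) (f : M →ₗ[R] N) (hf : Function.Surjective f) :
    IsPowerTorsion I N := fun y ↦ by
  obtain ⟨x, rfl⟩ := hf y
  exact (hM x).imp fun _ ht r hr ↦ by rw [← map_smul, ht r hr, map_zero]

theorem quotient_of_pow_le {Q : Ideal R} {t : ℕ} (h : I ^ t ≤ Q) : IsPowerTorsion I (R ⧸ Q) :=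
  fun x ↦ by
    obtain ⟨x, rfl⟩ := Ideal.Quotient.mk_surjective x
    exact ⟨t, fun r hr ↦ Ideal.Quotient.eq_zero_iff_mem.mpr (Q.mul_mem_right x (h hr))⟩

theorem quotient_pow (I : Ideal R) (t : ℕ) : IsPowerTorsion I (R ⧸ I ^ t) :=
  quotient_of_pow_le le_rfl

theorem quotient (I : Ideal R) : IsPowerTorsion I (R ⧸ I) :=
  quotient_of_pow_le (pow_one I).le

theorem primaryComponent (I : Ideal R) (M : Type*) [AddCommGroup M] [Module R M] :
    IsPowerTorsion I (I.primaryComponent M) := fun x ↦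
  (mem_primaryComponent_iff.mp x.2).imp fun _ ht r hr ↦ Subtype.ext (ht r hr)

theorem map_mem_primaryComponent (hM : IsPowerTorsion I M) (f : M →ₗ[R] N) (x : M) :
    f x ∈ I.primaryComponent N :=
  mem_primaryComponent_iff.mpr <|
    (hM x).imp fun _ ht r hr ↦ by rw [← map_smul, ht r hr, map_zero]

theorem exists_smul_ne_zero (hM : IsPowerTorsion I M) {x : M} (hx : x ≠ 0) :
    ∃ r : R, r • x ≠ 0 ∧ ∀ s ∈ I, s • r • x = 0 := by
  obtain ⟨t, ht⟩ := hM x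
  induction t with
  | zero => exact absurd (by simpa only [one_smul] using ht 1 (by simp)) hx
  | succ t ih =>
    by_cases h : ∀ r ∈ I ^ t, r • x = 0
    · exact ih h
    · push Not at h
      obtain ⟨r, hr, hrx⟩ := h
      refine ⟨r, hrx, fun s hs ↦ ?_⟩
      rw [smul_smul]
      exact ht _ (pow_succ' I t ▸ Ideal.mul_mem_mul hs hr)

theorem exists_pow_le_annihilator [Module.Finite R M] (hM : IsPowerTorsion I M) :
    ∃ t : ℕ, I ^ t ≤ Module.annihilator R M := by
  choose T hT using hM
  obtain ⟨s, hs⟩ := Module.Finite.fg_top (R := R) (M := M)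
  refine ⟨s.sup T, fun r hr ↦ Module.mem_annihilator.mpr fun x ↦ ?_⟩
  induction (hs ▸ Submodule.mem_top : x ∈ Submodule.span R (s : Set M)) using
    Submodule.span_induction with
  | mem x hx => exact hT x r (Ideal.pow_le_pow_right (Finset.le_sup (f := T) hx) hr)
  | zero => exact smul_zero r
  | add x y _ _ hx hy => rw [smul_add, hx, hy, add_zero]
  | smul c x _ hx => rw [smul_comm, hx, smul_zero]

end IsPowerTorsion

theorem isFiniteLength_of_forall_isMaximal [IsNoetherianRing R] [Module.Finite R M]
    (h : ∀ q : Ideal R, q.IsPrime → Module.annihilator R M ≤ q → q.IsMaximal) :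
    IsFiniteLength R M := by
  let A := R ⧸ Module.annihilator R M
  let _ : Module A M := (Module.isTorsionBySet_annihilator R M).module
  have : Module.Finite A M := Module.Finite.of_restrictScalars_finite R _ M
  have : Ring.KrullDimLE 0 A := Ring.krullDimLE_zero_iff.mpr fun q hq ↦ by
    have hq' : (q.comap (Ideal.Quotient.mk (Module.annihilator R M))).IsMaximal :=
      h _ inferInstance fun r hr ↦ by
        rw [Ideal.mem_comap, Ideal.Quotient.eq_zero_iff_mem.mpr hr]
        exact q.zero_mem
    rw [← Ideal.map_comap_of_surjective _ Ideal.Quotient.mk_surjective q]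
    refine hq'.map_of_surjective_of_ker_le Ideal.Quotient.mk_surjective fun r hr ↦ ?_
    rw [Ideal.mem_comap, RingHom.mem_ker.mp hr]
    exact q.zero_mem
  have : IsArtinianRing A := isArtinianRing_iff_krullDimLE_zero.mpr this
  have : IsArtinian R M :=
    isArtinian_of_surjective_algebraMap (R := A) Ideal.Quotient.mk_surjective
  exact isFiniteLength_iff_isNoetherian_isArtinian.mpr
    ⟨isNoetherian_of_isNoetherianRing_of_finite R M, this⟩

theorem isMaximal_of_lt_of_isPrime {p q : Ideal R} [p.IsPrime] [Ring.KrullDimLE 1 (R ⧸ p)]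
    (hq : q.IsPrime) (hpq : p < q) : q.IsMaximal := by
  have hmap : (q.map (Ideal.Quotient.mk p)).IsMaximal := by
    refine Ring.krullDimLE_one_iff_of_noZeroDivisors.mp ‹Ring.KrullDimLE 1 (R ⧸ p)› _
      (fun hbot ↦ ?_) (Ideal.isPrime_map_quotientMk_of_isPrime hpq.le)
    rw [Ideal.map_eq_bot_iff_le_ker, Ideal.mk_ker] at hbot
    exact hpq.not_ge hbot
  have hcomap := Ideal.comap_isMaximal_of_surjective _ Ideal.Quotient.mk_surjective (H := hmap)
  rwa [Ideal.comap_map_mk hpq.le] at hcomap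

theorem IsPowerTorsion.isFiniteLength [IsNoetherianRing R] [Module.Finite R M] {p : Ideal R}
    [p.IsPrime] [Ring.KrullDimLE 1 (R ⧸ p)] (hM : IsPowerTorsion p M) {b : R} (hb : b ∉ p)
    (hbM : ∀ x : M, b • x = 0) : IsFiniteLength R M := by
  obtain ⟨t, ht⟩ := hM.exists_pow_le_annihilator
  refine isFiniteLength_of_forall_isMaximal fun q hq hann ↦
    isMaximal_of_lt_of_isPrime (p := p) hq ?_
  exact (hq.le_of_pow_le (ht.trans hann)).lt_of_not_ge fun hqp ↦
    hb (hqp (hann (Module.mem_annihilator.mpr hbM)))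

end PowerTorsion

section ExtOfPowerTorsion

open scoped Pointwise

theorem exists_isSMulRegular_quotient_torsionBy_pow {R M : Type*} [CommRing R] [AddCommGroup M]
    [Module R M] [IsNoetherian R M] (a : R) :
    ∃ K : ℕ, IsSMulRegular (M ⧸ Submodule.torsionBy R M (a ^ K)) a := by
  let f : ℕ →o Submodule R M :=
    ⟨fun k ↦ Submodule.torsionBy R M (a ^ k), fun _ _ h ↦
      Submodule.torsionBy_le_torsionBy_of_dvd _ _ (pow_dvd_pow a h)⟩
  obtain ⟨K, hK⟩ := monotone_stabilizes_iff_noetherian.mpr ‹_› f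
  refine ⟨K, isSMulRegular_iff_right_eq_zero_of_smul.mpr fun x hx ↦ ?_⟩
  obtain ⟨x, rfl⟩ := Submodule.mkQ_surjective _ x
  rw [← map_smul, Submodule.mkQ_apply, Submodule.Quotient.mk_eq_zero] at hx
  rw [Submodule.mkQ_apply, Submodule.Quotient.mk_eq_zero]
  have hxK : x ∈ f (K + 1) := by
    rw [Submodule.mem_torsionBy_iff, ← mul_smul, ← pow_succ] at hx
    exact hx
  rwa [← hK (K + 1) K.le_succ] at hxK

variable {R : Type u} [CommRing R] [IsRegularLocalRing R] {n : ℕ} {p : Ideal R} [p.IsPrime]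
  [Ring.KrullDimLE 1 (R ⧸ p)] {a : R} {M : Type u} [AddCommGroup M] [Module R M]
  [Module.Finite R M]

theorem ext_subsingleton_of_isPowerTorsion_of_isSMulRegular (hn : ringKrullDim R = n)
    (hM : IsPowerTorsion p M) (ham : a ∈ maximalIdeal R) (hap : a ∉ p) (ha : IsSMulRegular M a)
    {i : ℕ} (hi : i + 1 ≠ n) : Subsingleton (ExtOf R M R i) := by
  set g := (a • (⊤ : Submodule R M)).mkQ
  have hg : Function.Surjective g := Submodule.mkQ_surjective _
  have hquot : IsFiniteLength R (M ⧸ a • (⊤ : Submodule R M)) :=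
    (hM.of_surjective g hg).isFiniteLength hap (Module.isTorsionBy_quotient_element_smul M a)
  have hsurj : Function.Surjective (ExtOf.precomp R (LinearMap.lsmul R M a) i) :=
    ExtOf.precomp_surjective (f := LinearMap.lsmul R M a) ha hg
      (LinearMap.exact_lsmul_mkQ_smul_top M a) (ext_subsingleton_of_isFiniteLength hn hquot hi)
  have : Module.Finite R (ExtOf R M R i) :=
    ModuleCat.finite_ext R (ModuleCat.of R M) (ModuleCat.of R R) i
  have hle : (⊤ : Submodule R (ExtOf R M R i)) ≤ maximalIdeal R • ⊤ := fun x _ ↦ by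
    obtain ⟨y, rfl⟩ := hsurj x
    rw [ExtOf.precomp_lsmul]
    exact Submodule.smul_mem_smul ham Submodule.mem_top
  have htop := Submodule.eq_bot_of_le_smul_of_le_jacobson_bot _ _ Module.Finite.fg_top hle
    (maximalIdeal_le_jacobson ⊥)
  exact (Submodule.subsingleton_iff R).mp (subsingleton_of_bot_eq_top htop.symm)

theorem ext_subsingleton_of_isPowerTorsion (hn : ringKrullDim R = n) (hM : IsPowerTorsion p M)
    (ham : a ∈ maximalIdeal R) (hap : a ∉ p) {i : ℕ} (hi : i + 1 < n) :
    Subsingleton (ExtOf R M R i) := by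
  obtain ⟨K, hK⟩ := exists_isSMulRegular_quotient_torsionBy_pow (M := M) a
  set G := Submodule.torsionBy R M (a ^ K)
  have hG : IsFiniteLength R G :=
    (hM.of_injective G.subtype G.injective_subtype).isFiniteLength
      (fun h ↦ hap (‹p.IsPrime›.mem_of_pow_mem K h)) (Submodule.torsionBy_isTorsionBy (a ^ K))
  exact ExtOf.subsingleton_middle G.injective_subtype G.mkQ_surjective
    (LinearMap.exact_subtype_mkQ G) (ext_subsingleton_of_isFiniteLength hn hG (by lia))
    (ext_subsingleton_of_isPowerTorsion_of_isSMulRegular hn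
      (hM.of_surjective G.mkQ G.mkQ_surjective) ham hap hK (by lia))

theorem exists_pow_smul_ext_eq_zero (hn : ringKrullDim R = n) (hM : IsPowerTorsion p M)
    (ham : a ∈ maximalIdeal R) (hap : a ∉ p) :
    ∃ K : ℕ, ∀ x : ExtOf R M R n, a ^ K • x = 0 := by
  obtain ⟨K, hK⟩ := exists_isSMulRegular_quotient_torsionBy_pow (M := M) a
  set G := Submodule.torsionBy R M (a ^ K)
  have hquot : Subsingleton (ExtOf R (M ⧸ G) R n) :=
    ext_subsingleton_of_isPowerTorsion_of_isSMulRegular hn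
      (hM.of_surjective G.mkQ G.mkQ_surjective) ham hap hK (by lia)
  refine ⟨K, fun x ↦ ?_⟩
  have hx : ExtOf.precomp R G.subtype n (a ^ K • x) = 0 := by
    have hzero : a ^ K • G.subtype = 0 :=
      LinearMap.ext fun y ↦ (Submodule.mem_torsionBy_iff _ _).mp y.2
    rw [map_smul, ← ExtOf.precomp_smul, hzero, ExtOf.precomp_zero]
  obtain ⟨y, hy⟩ := (ExtOf.exact_precomp_precomp G.injective_subtype G.mkQ_surjective
    (LinearMap.exact_subtype_mkQ G) n _).mp hx
  rw [← hy, Subsingleton.elim y 0, map_zero]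

end ExtOfPowerTorsion

section TorsionInjective

variable {R : Type u} [CommRing R] {I : Ideal R} {M N : Type u} [AddCommGroup M] [Module R M]
  [AddCommGroup N] [Module R N]

theorem IsPowerTorsion.exists_pow_inf_le_ker [IsNoetherianRing R] (hM : IsPowerTorsion I M)
    {J : Ideal R} (f : J →ₗ[R] M) : ∃ s : ℕ, ∀ x : J, (x : R) ∈ I ^ s → f x = 0 := by
  obtain ⟨t, ht⟩ :=
    (hM.of_injective _ (LinearMap.range f).injective_subtype).exists_pow_le_annihilator
  obtain ⟨k, hk⟩ := Ideal.exists_pow_inf_eq_pow_smul I J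
  refine ⟨k + t, fun x hx ↦ ?_⟩
  have hxJ : (x : R) ∈ I ^ t • (I ^ k • (⊤ : Ideal R) ⊓ J) := by
    have hle := (hk (k + t) (Nat.le_add_right k t)).le
    rw [Nat.add_sub_cancel_left] at hle
    exact hle ⟨by simpa using hx, x.2⟩
  have hker : I ^ t • (I ^ k • (⊤ : Ideal R) ⊓ J) ≤ (LinearMap.ker f).map J.subtype := by
    refine Submodule.smul_le.mpr fun r hr y hy ↦ ⟨r • ⟨y, hy.2⟩, ?_, rfl⟩
    rw [SetLike.mem_coe, LinearMap.mem_ker, map_smul]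
    exact congrArg Subtype.val
      (Module.mem_annihilator.mp (ht hr) ⟨f ⟨y, hy.2⟩, LinearMap.mem_range_self _ _⟩)
  obtain ⟨y, hy, hyx⟩ := hker hxJ
  rwa [← Subtype.ext hyx]

-- By Artin–Rees, Baer's criterion for a torsion module only has to be tested on cyclic modules
-- `R ⧸ Q` for arbitrarily small `Q`.
theorem IsPowerTorsion.injective_of_forall_exists_extension [IsNoetherianRing R]
    (hM : IsPowerTorsion I M)
    (h : ∀ s : ℕ, ∃ Q ≤ I ^ s, ∀ (A : Submodule R (R ⧸ Q)) (f : A →ₗ[R] M),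
      ∃ g : R ⧸ Q →ₗ[R] M, ∀ x : A, g x = f x) :
    Module.Injective R M := by
  refine Module.Baer.injective fun J f ↦ ?_
  obtain ⟨s, hs⟩ := hM.exists_pow_inf_le_ker f
  obtain ⟨Q, hQ, hext⟩ := h s
  let φ : J →ₗ[R] R ⧸ Q := Q.mkQ ∘ₗ J.subtype
  have hker : LinearMap.ker φ ≤ LinearMap.ker f := fun x hx ↦
    hs x (hQ ((Submodule.Quotient.mk_eq_zero Q).mp hx))
  obtain ⟨g, hg⟩ := hext (LinearMap.range φ)
    ((LinearMap.ker φ).liftQ f hker ∘ₗ φ.quotKerEquivRange.symm.toLinearMap)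
  refine ⟨g ∘ₗ Q.mkQ, fun x hx ↦
    (hg (φ.quotKerEquivRange (Submodule.Quotient.mk ⟨x, hx⟩))).trans ?_⟩
  rw [LinearMap.comp_apply, LinearEquiv.coe_coe, LinearEquiv.symm_apply_apply,
    Submodule.liftQ_apply]

theorem injective_primaryComponent [IsNoetherianRing R] (I : Ideal R) [Module.Injective R M] :
    Module.Injective R (I.primaryComponent M) := by
  refine (IsPowerTorsion.primaryComponent I M).injective_of_forall_exists_extension fun s ↦
    ⟨I ^ s, le_rfl, fun A f ↦ ?_⟩
  obtain ⟨g, hg⟩ := Module.Injective.out A.subtype A.injective_subtype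
    ((I.primaryComponent M).subtype ∘ₗ f)
  exact ⟨g.codRestrict _ fun x ↦ (IsPowerTorsion.quotient_pow I s).map_mem_primaryComponent g x,
    fun x ↦ Subtype.ext (hg x)⟩

theorem injective_of_retract [Module.Injective R N] (i : M →ₗ[R] N) (r : N →ₗ[R] M)
    (h : r ∘ₗ i = LinearMap.id) : Module.Injective R M := by
  refine ⟨fun X X' _ _ _ _ f hf g ↦ ?_⟩
  obtain ⟨k, hk⟩ := Module.Injective.out f hf (i ∘ₗ g)
  refine ⟨r ∘ₗ k, fun x ↦ ?_⟩
  rw [LinearMap.comp_apply, hk]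
  exact LinearMap.congr_fun h (g x)

variable (R M) in
theorem exists_injective_linearMap : ∃ (E : Type u) (_ : AddCommGroup E) (_ : Module R E)
    (j : M →ₗ[R] E), Module.Injective R E ∧ Function.Injective j :=
  ⟨(Injective.under (ModuleCat.of R M) : ModuleCat R), inferInstance, inferInstance,
    (Injective.ι (ModuleCat.of R M)).hom,
    (Module.injective_iff_injective_object R _).mpr
      (inferInstanceAs (CategoryTheory.Injective (Injective.under (ModuleCat.of R M)))),
    (ModuleCat.mono_iff_injective _).mp inferInstance⟩

theorem exists_injective_linearMap_primaryComponent_eq_bot [IsNoetherianRing R]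
    (hM : I.primaryComponent M = ⊥) :
    ∃ (E : Type u) (_ : AddCommGroup E) (_ : Module R E) (j : M →ₗ[R] E),
      Module.Injective R E ∧ Function.Injective j ∧ I.primaryComponent E = ⊥ := by
  obtain ⟨E, _, _, j, hE, hj⟩ := exists_injective_linearMap R M
  let G := I.primaryComponent E
  have : Module.Injective R G := injective_primaryComponent I
  obtain ⟨ρ, hρ⟩ := Module.Injective.out G.subtype G.injective_subtype LinearMap.id
  let C := LinearMap.ker ρ
  let π : E →ₗ[R] C := (LinearMap.id - G.subtype ∘ₗ ρ).codRestrict C fun x ↦ by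
    have : ρ (ρ x : E) = ρ x := hρ (ρ x)
    simp [C, this]
  have hπ (x : E) : (π x : E) = x - ρ x := rfl
  refine ⟨C, inferInstance, inferInstance, π ∘ₗ j, ?_, ?_, ?_⟩
  · refine injective_of_retract C.subtype π (LinearMap.ext fun x ↦ Subtype.ext ?_)
    simp [hπ, LinearMap.mem_ker.mp x.2]
  · refine (injective_iff_map_eq_zero _).mpr fun x hx ↦ ?_
    have hjx : j x = ρ (j x) := sub_eq_zero.mp (congrArg Subtype.val hx)
    obtain ⟨t, ht⟩ := mem_primaryComponent_iff.mp (ρ (j x)).2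
    have hmem : x ∈ I.primaryComponent M := mem_primaryComponent_iff.mpr
      ⟨t, fun r hr ↦ hj (by rw [map_smul, hjx, ht r hr, map_zero])⟩
    simpa [hM] using hmem
  · refine (Submodule.eq_bot_iff _).mpr fun x hx ↦ Subtype.ext ?_
    have hxG : (x : E) ∈ G :=
      mem_primaryComponent_iff.mpr ((mem_primaryComponent_iff.mp hx).imp fun t ht r hr ↦
        congrArg Subtype.val (ht r hr))
    have hρx : ρ x = ⟨x, hxG⟩ := hρ ⟨x, hxG⟩
    exact (congrArg Subtype.val hρx).symm.trans (congrArg Subtype.val (LinearMap.mem_ker.mp x.2))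

end TorsionInjective

section TorsionExtUniversal

variable {R : Type u} [CommRing R] {I : Ideal R} {H X Y : Type u} [AddCommGroup H] [Module R H]
  [AddCommGroup X] [Module R X] [AddCommGroup Y] [Module R Y]

namespace ExtOf

variable {J Z : Type u} [AddCommGroup J] [Module R J] [AddCommGroup Z] [Module R Z]
  {f : Y →ₗ[R] J} {g : J →ₗ[R] Z}

variable (X) in
/-- The map `Hom(X, H) → Ext^i(X, Y)` given by pulling back a class `ε ∈ Ext^i(H, Y)`. -/
def pullback {i : ℕ} (ε : ExtOf R H Y i) : (X →ₗ[R] H) →ₗ[R] ExtOf R X Y i where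
  toFun f := precomp Y f i ε
  map_add' f g := precomp_add f g ε
  map_smul' r f := precomp_smul f r ε

theorem pullback_comp {X' : Type u} [AddCommGroup X'] [Module R X'] {i : ℕ} (ε : ExtOf R H Y i)
    (f : X →ₗ[R] H) (g : X' →ₗ[R] X) :
    pullback X' ε (f ∘ₗ g) = precomp Y g i (pullback X ε f) :=
  precomp_comp g f ε

theorem pullback_ofHom (f : X →ₗ[R] H) (g : H →ₗ[R] Y) :
    pullback X (ofHom H Y g) f = ofHom X Y (g ∘ₗ f) :=
  precomp_ofHom f g

theorem postcomp_extClass_injective (hf : Function.Injective f) (hg : Function.Surjective g)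
    (hfg : Function.Exact f g) {i : ℕ} (hJ : Subsingleton (ExtOf R X J i)) :
    Function.Injective ((extClass hf hg hfg).postcompOfLinear R (ModuleCat.of R X)
      (rfl : i + 1 = i + 1)) := by
  refine (injective_iff_map_eq_zero _).mpr fun x hx ↦ ?_
  obtain ⟨y, rfl⟩ := (exact_postcomp_extClass hf hg hfg X i x).mp hx
  rw [Subsingleton.elim y 0, map_zero]

theorem postcomp_extClass_surjective (hf : Function.Injective f) (hg : Function.Surjective g)
    (hfg : Function.Exact f g) {i : ℕ} (_ : Subsingleton (ExtOf R X J (i + 1))) :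
    Function.Surjective ((extClass hf hg hfg).postcompOfLinear R (ModuleCat.of R X)
      (rfl : i + 1 = i + 1)) := fun x ↦
  (exact_extClass_postcomp hf hg hfg X i x).mp (Subsingleton.elim _ _)

end ExtOf

theorem primaryComponent_quotient_primaryComponent [IsNoetherianRing R] :
    I.primaryComponent (Y ⧸ I.primaryComponent Y) = ⊥ := by
  refine (Submodule.eq_bot_iff _).mpr fun y hy ↦ ?_
  obtain ⟨y, rfl⟩ := (I.primaryComponent Y).mkQ_surjective y
  obtain ⟨t, ht⟩ := mem_primaryComponent_iff.mp hy
  let N := Submodule.map (LinearMap.toSpanSingleton R Y y) (I ^ t)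
  have hN : N ≤ I.primaryComponent Y := by
    rintro _ ⟨r, hr, rfl⟩
    exact (Submodule.Quotient.mk_eq_zero _).mp (ht r hr)
  have : Module.Finite R N := Module.Finite.iff_fg.mpr ((IsNoetherian.noetherian (I ^ t)).map _)
  obtain ⟨s, hs⟩ := ((IsPowerTorsion.primaryComponent I Y).of_injective
    (Submodule.inclusion hN) (Submodule.inclusion_injective hN)).exists_pow_le_annihilator
  have hle : I ^ (s + t) ≤ LinearMap.ker (LinearMap.toSpanSingleton R Y y) := by
    rw [pow_add]
    refine Ideal.mul_le.mpr fun r hr r' hr' ↦ ?_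
    rw [← smul_eq_mul, LinearMap.mem_ker, map_smul]
    exact congrArg Subtype.val
      (Module.mem_annihilator.mp (hs hr) (⟨_, r', hr', rfl⟩ : N))
  exact (Submodule.Quotient.mk_eq_zero _).mpr (mem_primaryComponent_iff.mpr ⟨_, hle⟩)

theorem IsPowerTorsion.eq_zero_of_primaryComponent_eq_bot (hX : IsPowerTorsion I X)
    (hY : I.primaryComponent Y = ⊥) (f : X →ₗ[R] Y) : f = 0 :=
  LinearMap.ext fun x ↦ (Submodule.eq_bot_iff _).mp hY _ (hX.map_mem_primaryComponent f x)

theorem IsPowerTorsion.subsingleton_ext_of_injective (hX : IsPowerTorsion I X)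
    [Module.Injective R Y] (hY : I.primaryComponent Y = ⊥) (i : ℕ) :
    Subsingleton (ExtOf R X Y i) := by
  cases i with
  | zero =>
    have : Subsingleton (X →ₗ[R] Y) :=
      subsingleton_of_forall_eq 0 (hX.eq_zero_of_primaryComponent_eq_bot hY)
    exact (ExtOf.ofHom X Y).symm.injective.subsingleton
  | succ i => exact ExtOf.subsingleton_succ_of_injective i

/-- The class `ε ∈ Ext^i(H, Y)` makes the `I`-power torsion module `H` represent the functor
`Ext^i(-, Y)` on `I`-power torsion modules, compatibly with extensions. If `Ext^j(-, Y)` vanishes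
on these modules for `j < i`, then such an `H` exists, namely `H^i_I(Y)`. -/
structure IsTorsionExtUniversal (I : Ideal R) {i : ℕ} (ε : ExtOf R H Y i) : Prop where
  isPowerTorsion : IsPowerTorsion I H
  bijective_pullback (X : Type u) [AddCommGroup X] [Module R X] (hX : IsPowerTorsion I X) :
    Function.Bijective (ExtOf.pullback X ε)
  eq_zero_of_comp_eq_zero (X : Type u) [AddCommGroup X] [Module R X] (hX : IsPowerTorsion I X)
    (x : ExtOf R X H 1) (hx : x.comp ε (add_comm 1 i) = 0) : x = 0

theorem isTorsionExtUniversal_primaryComponent [IsNoetherianRing R] (I : Ideal R) (Y : Type u)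
    [AddCommGroup Y] [Module R Y] :
    IsTorsionExtUniversal I (ExtOf.ofHom _ _ (I.primaryComponent Y).subtype) where
  isPowerTorsion := .primaryComponent I Y
  bijective_pullback X _ _ hX := by
    refine ⟨fun f g hfg ↦ LinearMap.ext fun x ↦ Subtype.ext ?_, fun x ↦ ?_⟩
    · rw [ExtOf.pullback_ofHom, ExtOf.pullback_ofHom] at hfg
      exact LinearMap.congr_fun ((ExtOf.ofHom X Y).injective hfg) x
    · obtain ⟨f, rfl⟩ := (ExtOf.ofHom X Y).surjective x
      exact ⟨f.codRestrict _ (hX.map_mem_primaryComponent f), ExtOf.pullback_ofHom _ _⟩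
  eq_zero_of_comp_eq_zero X _ _ hX x hx := by
    let G := I.primaryComponent Y
    have hx' : ExtOf.postcomp X G.subtype 1 x = 0 := hx
    obtain ⟨z, rfl⟩ := (ExtOf.exact_extClass_postcomp G.injective_subtype G.mkQ_surjective
      (LinearMap.exact_subtype_mkQ G) X 0 x).mp hx'
    obtain ⟨f, rfl⟩ := (ExtOf.ofHom X (Y ⧸ G)).surjective z
    rw [hX.eq_zero_of_primaryComponent_eq_bot primaryComponent_quotient_primaryComponent f,
      map_zero, map_zero]

theorem IsTorsionExtUniversal.comp_extClass {J Z : Type u} [AddCommGroup J] [Module R J]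
    [AddCommGroup Z] [Module R Z] {i : ℕ} {ε : ExtOf R H Z i} (hε : IsTorsionExtUniversal I ε)
    {f : Y →ₗ[R] J} {g : J →ₗ[R] Z} (hf : Function.Injective f) (hg : Function.Surjective g)
    (hfg : Function.Exact f g) [Module.Injective R J] (hJ : I.primaryComponent J = ⊥) :
    IsTorsionExtUniversal I
      (ε.comp (ExtOf.extClass hf hg hfg) rfl : ExtOf R H Y (i + 1)) where
  isPowerTorsion := hε.isPowerTorsion
  bijective_pullback X _ _ hX := by
    have hδ : Function.Bijective ((ExtOf.extClass hf hg hfg).postcompOfLinear R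
        (ModuleCat.of R X) (rfl : i + 1 = i + 1)) :=
      ⟨ExtOf.postcomp_extClass_injective hf hg hfg (hX.subsingleton_ext_of_injective hJ i),
        ExtOf.postcomp_extClass_surjective hf hg hfg (ExtOf.subsingleton_succ_of_injective i)⟩
    convert hδ.comp (hε.bijective_pullback X hX) using 1
    exact funext fun u ↦ (Abelian.Ext.comp_assoc _ _ _ (zero_add i) rfl (by lia)).symm
  eq_zero_of_comp_eq_zero X _ _ hX x hx := by
    refine hε.eq_zero_of_comp_eq_zero X hX x ?_
    refine (map_eq_zero_iff _ (ExtOf.postcomp_extClass_injective hf hg hfg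
      (ExtOf.subsingleton_succ_of_injective i))).mp ?_
    exact (Abelian.Ext.comp_assoc x ε _ (add_comm 1 i) rfl (by lia)).trans hx

theorem exists_isTorsionExtUniversal [IsNoetherianRing R] (I : Ideal R) (i : ℕ) (Y : Type u)
    [AddCommGroup Y] [Module R Y] (hY : ∀ t : ℕ, ∀ j < i, Subsingleton (ExtOf R (R ⧸ I ^ t) Y j)) :
    ∃ (H : Type u) (_ : AddCommGroup H) (_ : Module R H) (ε : ExtOf R H Y i),
      IsTorsionExtUniversal I ε := by
  induction i generalizing Y with
  | zero => exact ⟨_, _, _, _, isTorsionExtUniversal_primaryComponent I Y⟩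
  | succ i ih =>
    have hYI : I.primaryComponent Y = ⊥ := by
      refine (Submodule.eq_bot_iff _).mpr fun y hy ↦ ?_
      obtain ⟨t, ht⟩ := mem_primaryComponent_iff.mp hy
      have := hY t 0 i.succ_pos
      have : Subsingleton (R ⧸ I ^ t →ₗ[R] Y) := (ExtOf.ofHom _ Y).injective.subsingleton
      let f : R ⧸ I ^ t →ₗ[R] Y :=
        (I ^ t).liftQ (LinearMap.toSpanSingleton R Y y) fun r hr ↦ ht r hr
      have hf : f (Submodule.Quotient.mk 1) = y := one_smul R y
      rw [← hf, Subsingleton.elim f 0, LinearMap.zero_apply]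
    obtain ⟨J, _, _, f, _, hf, hJ⟩ := exists_injective_linearMap_primaryComponent_eq_bot hYI
    have hg := (LinearMap.range f).mkQ_surjective
    have hfg := LinearMap.exact_map_mkQ_range f
    have hZ (t : ℕ) (j : ℕ) (hj : j < i) :
        Subsingleton (ExtOf R (R ⧸ I ^ t) (J ⧸ LinearMap.range f) j) := by
      have := hY t (j + 1) (by lia)
      exact (ExtOf.postcomp_extClass_injective hf hg hfg
        ((IsPowerTorsion.quotient_pow I t).subsingleton_ext_of_injective hJ j)).subsingleton
    obtain ⟨H, _, _, ε, hε⟩ := ih _ hZ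
    exact ⟨H, _, _, _, hε.comp_extClass hf hg hfg hJ⟩

end TorsionExtUniversal

section TorsionExtUniversalLocalization

namespace ExtOf

variable {R : Type u} [CommRing R] {M N P X : Type u} [AddCommGroup M] [Module R M]
  [AddCommGroup N] [Module R N] [AddCommGroup P] [Module R P] [AddCommGroup X] [Module R X]
  {f : M →ₗ[R] N} {g : N →ₗ[R] P}

theorem exists_comp_eq_of_subsingleton (hf : Function.Injective f)
    (hg : Function.Surjective g) (hfg : Function.Exact f g) (hX : Subsingleton (ExtOf R X M 1))
    (k : X →ₗ[R] P) : ∃ l : X →ₗ[R] N, g ∘ₗ l = k := by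
  obtain ⟨y, hy⟩ := (exact_postcomp_extClass hf hg hfg X 0 (ofHom X P k)).mp
    (Subsingleton.elim _ _)
  obtain ⟨l, rfl⟩ := (ofHom X N).surjective y
  exact ⟨l, (ofHom X P).injective ((postcomp_ofHom g l).symm.trans hy)⟩

theorem exists_comp_eq_smul (hf : Function.Injective f) (hg : Function.Surjective g)
    (hfg : Function.Exact f g) {r : R} (hr : ∀ x : ExtOf R P X 1, r • x = 0)
    (k : M →ₗ[R] X) : ∃ l : N →ₗ[R] X, l ∘ₗ f = r • k := by
  obtain ⟨y, hy⟩ := (exact_precomp_connecting hf hg hfg 0 (ofHom M X (r • k))).mp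
    (by rw [map_smul, map_smul, hr])
  obtain ⟨l, rfl⟩ := (ofHom N X).surjective y
  exact ⟨l, (ofHom M X).injective ((precomp_ofHom f l).symm.trans hy)⟩

end ExtOf

theorem IsPowerTorsion.of_isLocalizedModule {R M N : Type*} [CommRing R] [AddCommGroup M]
    [Module R M] [AddCommGroup N] [Module R N] {I : Ideal R} (hM : IsPowerTorsion I M)
    (S : Submonoid R) (φ : M →ₗ[R] N) [IsLocalizedModule S φ] : IsPowerTorsion I N := fun y ↦ by
  obtain ⟨⟨x, s⟩, hs⟩ := IsLocalizedModule.surj S φ y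
  refine (hM x).imp fun t ht r hr ↦ IsLocalizedModule.smul_injective φ s ?_
  change s • r • y = s • 0
  rw [smul_comm, hs, ← map_smul, ht r hr, map_zero, smul_zero]

theorem exists_maximalIdeal_pow_le {R : Type*} [CommRing R] [IsLocalRing R] [IsNoetherianRing R]
    {p I : Ideal R} [p.IsPrime] [Ring.KrullDimLE 1 (R ⧸ p)] {t : ℕ} (hpI : p ^ t ≤ I) {b : R}
    (hbI : b ∈ I) (hbp : b ∉ p) : ∃ s : ℕ, maximalIdeal R ^ s ≤ I := by
  refine Ideal.exists_pow_le_of_le_radical_of_fg ?_ (IsNoetherian.noetherian _)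
  rw [Ideal.radical_eq_sInf]
  refine le_sInf fun q ⟨hIq, hq⟩ ↦ (eq_maximalIdeal ?_).ge
  exact isMaximal_of_lt_of_isPrime hq
    ((hq.le_of_pow_le (hpI.trans hIq)).lt_of_not_ge fun hqp ↦ hbp (hqp (hIq hbI)))

namespace IsTorsionExtUniversal

theorem smul_ext_one_eq_zero {R : Type u} [CommRing R] {I : Ideal R} {H X Y : Type u}
    [AddCommGroup H] [Module R H] [AddCommGroup X] [Module R X] [AddCommGroup Y] [Module R Y]
    {i : ℕ} {ε : ExtOf R H Y i} (hε : IsTorsionExtUniversal I ε) (hX : IsPowerTorsion I X) {r : R}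
    (hr : ∀ x : ExtOf R X Y (i + 1), r • x = 0) (x : ExtOf R X H 1) : r • x = 0 := by
  refine hε.eq_zero_of_comp_eq_zero X hX _ ?_
  rw [Abelian.Ext.smul_comp]
  exact hr (x.comp ε (add_comm 1 i))

variable {R : Type u} [CommRing R] [IsRegularLocalRing R] {d : ℕ} {p : Ideal R} [p.IsPrime]
  [Ring.KrullDimLE 1 (R ⧸ p)] {H : Type u} [AddCommGroup H] [Module R H] {ε : ExtOf R H R d}
  (hd : ringKrullDim R = (d + 1 : ℕ)) (hε : IsTorsionExtUniversal p ε)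

include hd hε

theorem isSMulRegular {b : R} (hb : b ∉ p) : IsSMulRegular H b := by
  refine isSMulRegular_iff_right_eq_zero_of_smul.mpr fun x hx ↦ ?_
  let N := Submodule.span R {x}
  have hN : IsPowerTorsion p N := hε.isPowerTorsion.of_injective N.subtype N.injective_subtype
  have hbN (y : N) : b • y = 0 := by
    obtain ⟨r, hr⟩ := Submodule.mem_span_singleton.mp y.2
    refine Subtype.ext ?_
    rw [Submodule.coe_smul, ← hr, smul_comm, hx, smul_zero, Submodule.coe_zero]
  have : Subsingleton (ExtOf R N R d) :=
    ext_subsingleton_of_isFiniteLength hd (hN.isFiniteLength hb hbN) d.lt_succ_self.ne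
  have hN0 : N.subtype = 0 := (hε.bijective_pullback N hN).1 (Subsingleton.elim _ _)
  exact LinearMap.congr_fun hN0 ⟨x, Submodule.mem_span_singleton_self x⟩

variable {E : Type u} [AddCommGroup E] [Module R E] (φ : H →ₗ[R] E)
  [IsLocalizedModule p.primeCompl φ]

theorem isLocalizedModule_injective : Function.Injective φ :=
  (injective_iff_map_eq_zero φ).mpr fun x hx ↦ by
    obtain ⟨s, hs⟩ := (IsLocalizedModule.eq_zero_iff p.primeCompl φ).mp hx
    exact (hε.isSMulRegular hd s.2).right_eq_zero_of_smul hs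

/- A map from a submodule of `R ⧸ p ^ s` to `E` comes from `H` up to a scalar outside `p`, and it
extends up to another such scalar, since these scalars annihilate `Ext^{d+1}`. -/
include φ in
theorem injective_isLocalizedModule (hp : p ≠ maximalIdeal R) : Module.Injective R E := by
  obtain ⟨a, ham, hap⟩ := SetLike.exists_of_lt ((le_maximalIdeal_of_isPrime p).lt_of_ne hp)
  have hE : IsPowerTorsion p E := hε.isPowerTorsion.of_isLocalizedModule p.primeCompl φ
  refine hE.injective_of_forall_exists_extension fun s ↦ ⟨p ^ s, le_rfl, fun A f ↦ ?_⟩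
  have := Module.finitePresentation_of_finite R A
  obtain ⟨g, b, hg⟩ := Module.FinitePresentation.exists_lift_of_isLocalizedModule p.primeCompl φ f
  have hC : IsPowerTorsion p ((R ⧸ p ^ s) ⧸ A) :=
    (IsPowerTorsion.quotient_pow p s).of_surjective _ A.mkQ_surjective
  obtain ⟨K, hK⟩ := exists_pow_smul_ext_eq_zero hd hC ham hap
  obtain ⟨l, hl⟩ := ExtOf.exists_comp_eq_smul A.injective_subtype A.mkQ_surjective
    (LinearMap.exact_subtype_mkQ A) (hε.smul_ext_one_eq_zero hC hK) g
  let c : p.primeCompl := ⟨a, hap⟩ ^ K * b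
  refine ⟨(IsLocalizedModule.map_units φ c).unit⁻¹.val ∘ₗ φ ∘ₗ l, fun x ↦
    IsLocalizedModule.smul_injective φ c ?_⟩
  calc (c : R) • _ = φ (l x) := LinearMap.congr_fun (IsLocalizedModule.map_units φ c).mul_val_inv _
    _ = φ (a ^ K • g x) := congrArg φ (LinearMap.congr_fun hl x)
    _ = a ^ K • (b : R) • f x := by rw [map_smul]; exact congrArg _ (LinearMap.congr_fun hg x)
    _ = (c : R) • f x := (mul_smul _ _ _).symm

omit hd in
theorem isPowerTorsion_quotient_range :
    IsPowerTorsion (maximalIdeal R) (E ⧸ LinearMap.range φ) := fun y ↦ by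
  obtain ⟨y, rfl⟩ := (LinearMap.range φ).mkQ_surjective y
  obtain ⟨t, ht⟩ := hε.isPowerTorsion.of_isLocalizedModule p.primeCompl φ y
  obtain ⟨⟨x, b⟩, hb⟩ := IsLocalizedModule.surj p.primeCompl φ y
  let I := LinearMap.ker (LinearMap.toSpanSingleton R _ ((LinearMap.range φ).mkQ y))
  have hpI : p ^ t ≤ I := fun r hr ↦ by
    rw [LinearMap.mem_ker, LinearMap.toSpanSingleton_apply, ← map_smul, ht r hr, map_zero]
  have hbI : (b : R) ∈ I := (Submodule.Quotient.mk_eq_zero _).mpr ⟨x, hb.symm⟩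
  exact exists_maximalIdeal_pow_le hpI hbI b.2

theorem injective_quotient_range (hp : p ≠ maximalIdeal R) :
    Module.Injective R (E ⧸ LinearMap.range φ) := by
  obtain ⟨a, ham, hap⟩ := SetLike.exists_of_lt ((le_maximalIdeal_of_isPrime p).lt_of_ne hp)
  have := hε.injective_isLocalizedModule hd φ hp
  refine (hε.isPowerTorsion_quotient_range φ).injective_of_forall_exists_extension fun s ↦ ?_
  obtain ⟨t, ht⟩ := exists_symbolicPower_le_maximalIdeal_pow p s
  refine ⟨symbolicPower p t, ht, fun A f ↦ ?_⟩
  have hA : IsPowerTorsion p A := (IsPowerTorsion.quotient_of_pow_le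
    (pow_le_symbolicPower p t)).of_injective A.subtype A.injective_subtype
  have haA : IsSMulRegular A a := (isSMulRegular_quotient_symbolicPower hap).submodule A a
  have hA1 : Subsingleton (ExtOf R A H 1) := by
    have := ext_subsingleton_of_isPowerTorsion_of_isSMulRegular hd hA ham hap haA
      (d + 1).lt_succ_self.ne'
    exact subsingleton_of_forall_eq 0 fun x ↦
      hε.eq_zero_of_comp_eq_zero A hA x (Subsingleton.elim _ _)
  obtain ⟨l, rfl⟩ := ExtOf.exists_comp_eq_of_subsingleton
    (hε.isLocalizedModule_injective hd φ) (LinearMap.range φ).mkQ_surjective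
    (LinearMap.exact_map_mkQ_range φ) hA1 f
  obtain ⟨g, hg⟩ := Module.Injective.out A.subtype A.injective_subtype l
  exact ⟨(LinearMap.range φ).mkQ ∘ₗ g, fun x ↦ congrArg (LinearMap.range φ).mkQ (hg x)⟩

end IsTorsionExtUniversal

end TorsionExtUniversalLocalization

section LengthModRegular

open scoped Pointwise

variable {R : Type*} [CommRing R] {M N : Type*} [AddCommGroup M] [Module R M] [AddCommGroup N]
  [Module R N] {a : R}

theorem length_quotient_pow_smul_top (ha : IsSMulRegular M a) (j : ℕ) :
    Module.length R (M ⧸ a ^ j • (⊤ : Submodule R M)) =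
      j * Module.length R (M ⧸ a • (⊤ : Submodule R M)) := by
  induction j with
  | zero =>
    rw [pow_zero, one_smul, Nat.cast_zero, zero_mul, Module.length_eq_zero_iff]
    infer_instance
  | succ j ih =>
    let f : M ⧸ a ^ j • (⊤ : Submodule R M) →ₗ[R] M ⧸ a ^ (j + 1) • (⊤ : Submodule R M) :=
      Submodule.mapQ _ _ (LinearMap.lsmul R M a) (by
        rintro _ ⟨y, -, rfl⟩
        exact ⟨y, trivial, (by rw [pow_succ', mul_smul] : a ^ (j + 1) • y = a • a ^ j • y)⟩)
    let g : M ⧸ a ^ (j + 1) • (⊤ : Submodule R M) →ₗ[R] M ⧸ a • (⊤ : Submodule R M) :=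
      Submodule.factor (by
        rintro _ ⟨y, -, rfl⟩
        exact ⟨a ^ j • y, trivial, (by rw [pow_succ', mul_smul] : a • a ^ j • y = a ^ (j + 1) • y)⟩)
    have hf : Function.Injective f := by
      refine (injective_iff_map_eq_zero f).mpr fun x hx ↦ ?_
      obtain ⟨x, rfl⟩ := Submodule.mkQ_surjective _ x
      obtain ⟨y, -, hy⟩ := (Submodule.Quotient.mk_eq_zero _).mp hx
      refine (Submodule.Quotient.mk_eq_zero _).mpr ⟨y, trivial, ha ?_⟩
      simpa [pow_succ', mul_smul] using hy
    have hfg : Function.Exact f g := fun x ↦ by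
      obtain ⟨x, rfl⟩ := Submodule.mkQ_surjective _ x
      refine ⟨fun hx ↦ ?_, ?_⟩
      · obtain ⟨y, -, rfl⟩ := (Submodule.Quotient.mk_eq_zero _).mp hx
        exact ⟨Submodule.mkQ _ y, rfl⟩
      · rintro ⟨y, hy⟩
        obtain ⟨y, rfl⟩ := Submodule.mkQ_surjective _ y
        rw [← hy]
        exact (Submodule.Quotient.mk_eq_zero _).mpr ⟨y, trivial, rfl⟩
    rw [Module.length_eq_add_of_exact f g hf (Submodule.factor_surjective _) hfg, ih]
    push_cast
    ring

theorem exists_comap_pow_smul_top_le [IsNoetherianRing R] [Module.Finite R M] (a : R)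
    {f : N →ₗ[R] M} (hf : Function.Injective f) :
    ∃ k, ∀ j, (a ^ (j + k) • (⊤ : Submodule R M)).comap f ≤ a ^ j • (⊤ : Submodule R N) := by
  obtain ⟨k, hk⟩ := Ideal.exists_pow_inf_eq_pow_smul (Ideal.span {a}) (LinearMap.range f)
  refine ⟨k, fun j x hx ↦ ?_⟩
  have hfx : f x ∈ Ideal.span {a} ^ j • LinearMap.range f := by
    have h := hk (j + k) (Nat.le_add_left k j)
    rw [Nat.add_sub_cancel, Ideal.span_singleton_pow _ (j + k),
      Submodule.ideal_span_singleton_smul] at h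
    exact Submodule.smul_mono le_rfl inf_le_right (h.le ⟨hx, x, rfl⟩)
  rw [Ideal.span_singleton_pow, Submodule.ideal_span_singleton_smul] at hfx
  obtain ⟨_, ⟨y, rfl⟩, hy⟩ := hfx
  exact ⟨y, trivial, hf ((map_smul f _ _).trans hy)⟩

theorem length_quotient_smul_top_le_of_injective [IsNoetherianRing R] [Module.Finite R M]
    (haM : IsSMulRegular M a) (haN : IsSMulRegular N a) {f : N →ₗ[R] M}
    (hf : Function.Injective f) :
    Module.length R (N ⧸ a • (⊤ : Submodule R N)) ≤
      Module.length R (M ⧸ a • (⊤ : Submodule R M)) := by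
  obtain ⟨k, hk⟩ := exists_comap_pow_smul_top_le a hf
  have hle (j : ℕ) : j * Module.length R (N ⧸ a • (⊤ : Submodule R N)) ≤
      (j + k : ℕ) * Module.length R (M ⧸ a • (⊤ : Submodule R M)) := by
    rw [← length_quotient_pow_smul_top haN, ← length_quotient_pow_smul_top haM]
    refine (Module.length_le_of_surjective _ (Submodule.factor_surjective (hk j))).trans
      (Module.length_le_of_injective (Submodule.mapQ _ _ f le_rfl) ?_)
    exact LinearMap.ker_eq_bot.mp (Submodule.ker_liftQ_eq_bot _ _ _ (by simp [LinearMap.ker_comp]))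
  by_contra! hlt
  obtain ⟨m, hm⟩ := ENat.ne_top_iff_exists.mp hlt.ne_top
  rw [← hm] at hle hlt
  have := (mul_le_mul_right (Order.add_one_le_of_lt hlt) _).trans (hle (k * m + 1))
  norm_cast at this
  lia

end LengthModRegular

section EssentialRange

open scoped Pointwise

/-- Every nonzero element of `M` has a nonzero multiple in `N`. -/
def IsEssential {R M : Type*} [Semiring R] [AddCommMonoid M] [Module R M] (N : Submodule R M) :
    Prop :=
  ∀ x : M, x ≠ 0 → ∃ r : R, r • x ≠ 0 ∧ r • x ∈ N

theorem IsEssential.inf_ne_bot {R M : Type*} [Semiring R] [AddCommMonoid M] [Module R M]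
    {N : Submodule R M} (hN : IsEssential N) {L : Submodule R M} (hL : L ≠ ⊥) : L ⊓ N ≠ ⊥ := by
  obtain ⟨x, hxL, hx⟩ := L.exists_mem_ne_zero_of_ne_bot hL
  obtain ⟨r, hrx, hrN⟩ := hN x hx
  exact (Submodule.ne_bot_iff _).mpr ⟨r • x, ⟨L.smul_mem r hxL, hrN⟩, hrx⟩

theorem IsEssential.range_comp {R M N P : Type*} [Semiring R] [AddCommMonoid M] [Module R M]
    [AddCommMonoid N] [Module R N] [AddCommMonoid P] [Module R P] {f : M →ₗ[R] N}
    {g : N →ₗ[R] P} (hg : Function.Injective g) (hgr : IsEssential (LinearMap.range g))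
    (hfr : IsEssential (LinearMap.range f)) : IsEssential (LinearMap.range (g ∘ₗ f)) := by
  intro x hx
  obtain ⟨r, hrx, y, hy⟩ := hgr x hx
  obtain ⟨s, hsy, z, hz⟩ := hfr y (by rintro rfl; exact hrx (by rw [← hy, map_zero]))
  have hgs : g (s • y) = (s * r) • x := by rw [map_smul, hy, mul_smul]
  exact ⟨s * r, by rwa [← hgs, Ne, map_eq_zero_iff g hg], z, by rw [← hgs, ← hz]; rfl⟩

theorem isEssential_range_isLocalizedModule {R M N : Type*} [CommRing R] [AddCommGroup M]
    [Module R M] [AddCommGroup N] [Module R N] (S : Submonoid R) (φ : M →ₗ[R] N)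
    [IsLocalizedModule S φ] : IsEssential (LinearMap.range φ) := fun y hy ↦ by
  obtain ⟨⟨x, s⟩, hs⟩ := IsLocalizedModule.surj S φ y
  refine ⟨s, fun h ↦ hy (IsLocalizedModule.smul_injective φ s ?_), x, hs.symm⟩
  exact h.trans (smul_zero s).symm

theorem isSMulRegular_quotient_of_notMem {R : Type*} [CommRing R] {p : Ideal R} [p.IsPrime] {b : R}
    (hb : b ∉ p) : IsSMulRegular (R ⧸ p) b :=
  isSMulRegular_iff_right_eq_zero_of_smul.mpr fun x hx ↦ by
    obtain ⟨x, rfl⟩ := Ideal.Quotient.mk_surjective x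
    refine Ideal.Quotient.eq_zero_iff_mem.mpr ((‹p.IsPrime›.mem_or_mem ?_).resolve_left hb)
    exact Ideal.Quotient.eq_zero_iff_mem.mp hx

theorem smul_top_ne_top_of_mem_maximalIdeal {R M : Type*} [CommRing R] [IsLocalRing R]
    [AddCommGroup M] [Module R M] [Module.Finite R M] [Nontrivial M] {a : R}
    (ha : a ∈ maximalIdeal R) : a • (⊤ : Submodule R M) ≠ ⊤ :=
  (Submodule.top_ne_pointwise_smul_of_mem_jacobson_annihilator
    (maximalIdeal_le_jacobson _ ha)).symm

theorem IsPowerTorsion.isFiniteLength_quotient_smul_top {R M : Type*} [CommRing R]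
    [IsNoetherianRing R] [AddCommGroup M] [Module R M] [Module.Finite R M] {p : Ideal R}
    [p.IsPrime] [Ring.KrullDimLE 1 (R ⧸ p)] (hM : IsPowerTorsion p M) {a : R} (ha : a ∉ p) :
    IsFiniteLength R (M ⧸ a • (⊤ : Submodule R M)) :=
  (hM.of_surjective _ (Submodule.mkQ_surjective _)).isFiniteLength ha fun x ↦ by
    obtain ⟨x, rfl⟩ := Submodule.mkQ_surjective _ x
    exact (Submodule.Quotient.mk_eq_zero _).mpr ⟨x, trivial, rfl⟩

theorem two_mul_length_quotient_smul_top_le {R M : Type*} [CommRing R] [AddCommGroup M]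
    [Module R M] (a : R) : 2 * Module.length R (M ⧸ a • (⊤ : Submodule R M)) ≤
      Module.length R ((M × M) ⧸ a • (⊤ : Submodule R (M × M))) := by
  let π := (a • (⊤ : Submodule R M)).mkQ
  let g : ((M × M) ⧸ a • (⊤ : Submodule R (M × M))) →ₗ[R] _ :=
    Submodule.liftQ _ (π.prodMap π) (by
      rintro _ ⟨⟨x, y⟩, -, rfl⟩
      exact Prod.ext ((Submodule.Quotient.mk_eq_zero _).mpr ⟨x, trivial, rfl⟩)
        ((Submodule.Quotient.mk_eq_zero _).mpr ⟨y, trivial, rfl⟩))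
  have hπ : Function.Surjective π := Submodule.mkQ_surjective _
  have hg : Function.Surjective g := fun z ↦ by
    obtain ⟨y, rfl⟩ := hπ.prodMap hπ z
    exact ⟨Submodule.mkQ _ y, rfl⟩
  calc _ = Module.length R (_ × _) := by rw [Module.length_prod, two_mul]
    _ ≤ _ := Module.length_le_of_surjective g hg

namespace IsTorsionExtUniversal

theorem finite_linearMap {R : Type u} [CommRing R] [IsNoetherianRing R] {I : Ideal R}
    {H X Y : Type u} [AddCommGroup H] [Module R H] [AddCommGroup X] [Module R X]
    [Module.Finite R X] [AddCommGroup Y] [Module R Y] [Module.Finite R Y] {i : ℕ}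
    {ε : ExtOf R H Y i} (hε : IsTorsionExtUniversal I ε) (hX : IsPowerTorsion I X) :
    Module.Finite R (X →ₗ[R] H) :=
  have : Module.Finite R (ExtOf R X Y i) := ModuleCat.finite_ext R _ _ i
  Module.Finite.equiv
    (LinearEquiv.ofBijective (ExtOf.pullback X ε) (hε.bijective_pullback X hX)).symm

variable {R : Type u} [CommRing R] [IsRegularLocalRing R] {d : ℕ} {p : Ideal R} [p.IsPrime]
  [Ring.KrullDimLE 1 (R ⧸ p)] {H : Type u} [AddCommGroup H] [Module R H] {ε : ExtOf R H R d}
  (hd : ringKrullDim R = (d + 1 : ℕ)) (hε : IsTorsionExtUniversal p ε)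

include hd hε

theorem length_linearMap_quotient_smul_top {X : Type u} [AddCommGroup X] [Module R X]
    [Module.Finite R X] (hX : IsPowerTorsion p X) {a : R} (ham : a ∈ maximalIdeal R)
    (hap : a ∉ p) (haX : IsSMulRegular X a) :
    Module.length R ((X →ₗ[R] H) ⧸ a • (⊤ : Submodule R (X →ₗ[R] H))) =
      Module.length R (X ⧸ a • (⊤ : Submodule R X)) := by
  have hf : Function.Injective (LinearMap.lsmul R X a) := haX
  have hg := (a • (⊤ : Submodule R X)).mkQ_surjective
  have hfg := LinearMap.exact_lsmul_mkQ_smul_top X a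
  have hvanish := ext_subsingleton_of_isPowerTorsion_of_isSMulRegular hd hX ham hap haX
    (d + 1).lt_succ_self.ne'
  have hpull := hε.bijective_pullback X hX
  let δ := ExtOf.connecting R hf hg hfg d ∘ₗ ExtOf.pullback X ε
  have hδ : Function.Surjective δ :=
    (ExtOf.connecting_surjective hf hg hfg hvanish).comp hpull.2
  have hker : LinearMap.ker δ = a • (⊤ : Submodule R (X →ₗ[R] H)) := by
    ext u
    refine (ExtOf.exact_precomp_connecting hf hg hfg d (ExtOf.pullback X ε u)).trans ?_
    constructor
    · rintro ⟨z, hz⟩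
      obtain ⟨v, rfl⟩ := hpull.2 z
      refine ⟨v, trivial, hpull.1 ?_⟩
      rw [ExtOf.precomp_lsmul] at hz
      exact (map_smul _ _ _).trans hz
    · rintro ⟨v, -, rfl⟩
      exact ⟨ExtOf.pullback X ε v, (ExtOf.precomp_lsmul a _).trans (map_smul _ a v).symm⟩
  rw [← hker, (δ.quotKerEquivOfSurjective hδ).length_eq,
    length_ext_of_isFiniteLength hd (hX.isFiniteLength_quotient_smul_top hap)]

theorem exists_linearMap_ne_zero (hp : p ≠ maximalIdeal R) : ∃ w : R ⧸ p →ₗ[R] H, w ≠ 0 := by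
  obtain ⟨a, ham, hap⟩ := SetLike.exists_of_lt ((le_maximalIdeal_of_isPrime p).lt_of_ne hp)
  by_contra! h
  have : Subsingleton (R ⧸ p →ₗ[R] H) := subsingleton_of_forall_eq 0 h
  have hlen := hε.length_linearMap_quotient_smul_top hd (.quotient p) ham hap
    (isSMulRegular_quotient_of_notMem hap)
  rw [Module.length_eq_zero, eq_comm, Module.length_eq_zero_iff,
    Submodule.Quotient.subsingleton_iff] at hlen
  exact smul_top_ne_top_of_mem_maximalIdeal ham hlen

/- Otherwise `Hom(R ⧸ p, H)` contains `(R ⧸ p)²`, but modulo `a` it has the length of `R ⧸ p`. -/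
theorem not_injective_coprod (hp : p ≠ maximalIdeal R) (w v : R ⧸ p →ₗ[R] H) :
    ¬ Function.Injective (w.coprod v) := fun hwv ↦ by
  obtain ⟨a, ham, hap⟩ := SetLike.exists_of_lt ((le_maximalIdeal_of_isPrime p).lt_of_ne hp)
  have haB : IsSMulRegular (R ⧸ p) a := isSMulRegular_quotient_of_notMem hap
  have haHom : IsSMulRegular (R ⧸ p →ₗ[R] H) a := fun f g hfg ↦
    LinearMap.ext fun x ↦ hε.isSMulRegular hd hap (LinearMap.congr_fun hfg x)
  have := hε.finite_linearMap (.quotient p)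
  let f : (R ⧸ p) × (R ⧸ p) →ₗ[R] R ⧸ p →ₗ[R] H :=
    (LinearMap.llcomp R _ _ H w ∘ₗ LinearMap.mul R _).coprod
      (LinearMap.llcomp R _ _ H v ∘ₗ LinearMap.mul R _)
  have hf : Function.Injective f := fun x y hxy ↦ hwv (by
    simpa [f] using LinearMap.congr_fun hxy 1)
  set ℓ := Module.length R ((R ⧸ p) ⧸ a • (⊤ : Submodule R (R ⧸ p)))
  have hle : 2 * ℓ ≤ ℓ :=
    calc 2 * ℓ ≤ _ := two_mul_length_quotient_smul_top_le a
      _ ≤ _ := length_quotient_smul_top_le_of_injective haHom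
        (Prod.isSMulRegular_iff.mpr ⟨haB, haB⟩) hf
      _ = ℓ := hε.length_linearMap_quotient_smul_top hd (.quotient p) ham hap haB
  have htop : ℓ ≠ ⊤ :=
    Module.length_ne_top_iff.mpr ((IsPowerTorsion.quotient p).isFiniteLength_quotient_smul_top hap)
  have hzero : ℓ ≠ 0 := by
    rw [Ne, Module.length_eq_zero_iff, Submodule.Quotient.subsingleton_iff]
    exact smul_top_ne_top_of_mem_maximalIdeal ham
  obtain ⟨l, hl⟩ := ENat.ne_top_iff_exists.mp htop
  rw [← hl] at hle hzero
  norm_cast at hle hzero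
  lia

theorem injective_of_ne_zero {w : R ⧸ p →ₗ[R] H} (hw : w ≠ 0) : Function.Injective w := by
  refine (injective_iff_map_eq_zero w).mpr fun x hx ↦ ?_
  obtain ⟨x, rfl⟩ := Ideal.Quotient.mk_surjective x
  by_contra hxp
  rw [Ideal.Quotient.eq_zero_iff_mem] at hxp
  have hw1 : w 1 = 0 := (hε.isSMulRegular hd hxp).right_eq_zero_of_smul (by
    rwa [← map_smul, Algebra.smul_def, mul_one])
  refine hw (LinearMap.ext fun y ↦ ?_)
  obtain ⟨y, rfl⟩ := Ideal.Quotient.mk_surjective y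
  rw [← mul_one (Ideal.Quotient.mk p y), ← Ideal.Quotient.algebraMap_eq, ← Algebra.smul_def,
    map_smul, hw1, smul_zero, LinearMap.zero_apply]

theorem isEssential_range_of_ne_zero (hp : p ≠ maximalIdeal R) {w : R ⧸ p →ₗ[R] H}
    (hw : w ≠ 0) : IsEssential (LinearMap.range w) := fun x hx ↦ by
  obtain ⟨r, hrx, hpr⟩ := hε.isPowerTorsion.exists_smul_ne_zero hx
  let v : R ⧸ p →ₗ[R] H := p.liftQ (LinearMap.toSpanSingleton R H (r • x)) hpr
  have hv (b : R) : v (Ideal.Quotient.mk p b) = b • r • x := rfl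
  have hinj := hε.not_injective_coprod hd hp w v
  rw [injective_iff_map_eq_zero] at hinj
  push Not at hinj
  obtain ⟨⟨b, c⟩, hbc, hne⟩ := hinj
  obtain ⟨c, rfl⟩ := Ideal.Quotient.mk_surjective c
  rw [LinearMap.coprod_apply, hv] at hbc
  refine ⟨c * r, fun hc ↦ ?_, -b, ?_⟩
  · rw [mul_smul] at hc
    have hcp : Ideal.Quotient.mk p c = 0 := by
      by_contra hcp
      rw [Ideal.Quotient.eq_zero_iff_mem] at hcp
      exact hrx ((hε.isSMulRegular hd hcp).right_eq_zero_of_smul hc)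
    rw [hc, add_zero] at hbc
    exact hne (Prod.ext (hε.injective_of_ne_zero hd hw (hbc.trans (map_zero w).symm)) hcp)
  · rw [map_neg, mul_smul, neg_eq_iff_add_eq_zero, hbc]

theorem smul_not_surjective {a : R} (ham : a ∈ maximalIdeal R) (hap : a ∉ p) :
    ¬ Function.Surjective fun x : H ↦ a • x := fun ha ↦ by
  obtain ⟨w, hw⟩ := hε.exists_linearMap_ne_zero hd fun h ↦ hap (h ▸ ham)
  have := hε.finite_linearMap (.quotient p)
  have : Nontrivial (R ⧸ p →ₗ[R] H) := ⟨w, 0, hw⟩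
  refine smul_top_ne_top_of_mem_maximalIdeal (M := R ⧸ p →ₗ[R] H) ham
    (top_unique fun f _ ↦ ?_)
  let e := LinearEquiv.ofBijective (LinearMap.lsmul R H a) ⟨hε.isSMulRegular hd hap, ha⟩
  exact ⟨e.symm.toLinearMap ∘ₗ f, trivial, LinearMap.ext fun x ↦ e.apply_symm_apply (f x)⟩

theorem not_injective (hp : p ≠ maximalIdeal R) : ¬ Module.Injective R H := fun _ ↦ by
  obtain ⟨a, ham, hap⟩ := SetLike.exists_of_lt ((le_maximalIdeal_of_isPrime p).lt_of_ne hp)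
  obtain ⟨h, hh⟩ := Module.Injective.out (LinearMap.lsmul R H a) (hε.isSMulRegular hd hap)
    LinearMap.id
  refine hε.smul_not_surjective hd ham hap fun x ↦ ⟨h x, ?_⟩
  exact (map_smul h a x).symm.trans (hh x)

theorem not_surjective_isLocalizedModule {E : Type u} [AddCommGroup E] [Module R E]
    (φ : H →ₗ[R] E) [IsLocalizedModule p.primeCompl φ] (hp : p ≠ maximalIdeal R) :
    ¬ Function.Surjective φ := fun hφ ↦ by
  obtain ⟨a, ham, hap⟩ := SetLike.exists_of_lt ((le_maximalIdeal_of_isPrime p).lt_of_ne hp)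
  refine hε.smul_not_surjective hd ham hap fun x ↦ ?_
  obtain ⟨y, hy⟩ := ((Module.End.isUnit_iff _).mp
    (IsLocalizedModule.map_units φ (⟨a, hap⟩ : p.primeCompl))).2 (φ x)
  obtain ⟨y, rfl⟩ := hφ y
  exact ⟨y, hε.isLocalizedModule_injective hd φ ((map_smul φ a y).trans hy)⟩

end IsTorsionExtUniversal

end EssentialRange

section TorsionInjectiveDecomposition

theorem injective_finsupp {R : Type u} [CommRing R] [IsNoetherianRing R] (ι M : Type u)
    [AddCommGroup M] [Module R M] [Module.Injective R M] : Module.Injective R (ι →₀ M) := by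
  classical
  refine Module.Baer.injective fun I f ↦ ?_
  obtain ⟨t, ht⟩ := Module.Finite.fg_top (R := R) (M := I)
  let S : Finset ι := t.biUnion fun x ↦ (f x).support
  have hS (x : I) : f x ∈ Finsupp.supported M R (S : Set ι) := by
    have hle : Submodule.span R (t : Set I) ≤ (Finsupp.supported M R (S : Set ι)).comap f :=
      Submodule.span_le.mpr fun x hx ↦ (Finsupp.mem_supported R (f x)).mpr
        (Finset.coe_subset.mpr (Finset.subset_biUnion_of_mem (fun x ↦ (f x).support) hx))
    exact hle (ht ▸ Submodule.mem_top)
  choose g hg using fun i : ι ↦ Module.Injective.out I.subtype I.injective_subtype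
    (Finsupp.lapply (M := M) i ∘ₗ f)
  refine ⟨∑ i ∈ S, Finsupp.lsingle i ∘ₗ g i, fun x hx ↦ ?_⟩
  calc _ = ∑ i ∈ S, Finsupp.single i (f ⟨x, hx⟩ i) := by
        rw [LinearMap.sum_apply]
        exact Finset.sum_congr rfl fun i _ ↦ congrArg (Finsupp.single i) (hg i ⟨x, hx⟩)
    _ = f ⟨x, hx⟩ := (Finsupp.sum_of_support_subset _ ((Finsupp.mem_supported R _).mp (hS _)) _
        fun _ _ ↦ Finsupp.single_zero _).symm.trans (Finsupp.sum_single _)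

variable {R : Type*} [CommRing R] {I : Ideal R} {M N : Type*} [AddCommGroup M] [Module R M]
  [AddCommGroup N] [Module R N]

theorem IsPowerTorsion.finsupp (ι : Type*) (hM : IsPowerTorsion I M) :
    IsPowerTorsion I (ι →₀ M) := fun z ↦ by
  choose t ht using hM
  refine ⟨z.support.sup fun i ↦ t (z i), fun r hr ↦ Finsupp.ext fun i ↦ ?_⟩
  by_cases hi : i ∈ z.support
  · exact ht _ r (Ideal.pow_le_pow_right (Finset.le_sup (f := fun i ↦ t (z i)) hi) hr)
  · rw [Finsupp.smul_apply, Finsupp.notMem_support_iff.mp hi, smul_zero, Finsupp.zero_apply]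

theorem IsPowerTorsion.injective_of_torsionBySet (hM : IsPowerTorsion I M) {f : M →ₗ[R] N}
    (hf : ∀ x, (∀ s ∈ I, s • x = 0) → f x = 0 → x = 0) : Function.Injective f := by
  refine (injective_iff_map_eq_zero f).mpr fun x hx ↦ ?_
  by_contra hx0
  obtain ⟨r, hr, hIr⟩ := hM.exists_smul_ne_zero hx0
  exact hr (hf _ hIr (by rw [map_smul, hx, smul_zero]))

theorem IsPowerTorsion.isEssential_of_torsionBySet_le (hM : IsPowerTorsion I M)
    {N : Submodule R M} (hN : Submodule.torsionBySet R M I ≤ N) : IsEssential N := fun _ hx ↦ by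
  obtain ⟨r, hr, hIr⟩ := hM.exists_smul_ne_zero hx
  exact ⟨r, hr, hN ((Submodule.mem_torsionBySet_iff _ _).mpr fun s ↦ hIr s s.2)⟩

theorem IsEssential.torsionBySet_le [I.IsMaximal] {N : Submodule R M} (hN : IsEssential N) :
    Submodule.torsionBySet R M I ≤ N := fun x hx ↦ by
  by_cases hx0 : x = 0
  · exact hx0 ▸ N.zero_mem
  have hIx : ∀ s ∈ I, s • x = 0 := fun s hs ↦ (Submodule.mem_torsionBySet_iff _ _).mp hx ⟨s, hs⟩
  obtain ⟨r, hr, hrN⟩ := hN x hx0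
  obtain ⟨b, c, hc, hbc⟩ := Ideal.IsMaximal.exists_inv ‹I.IsMaximal› fun hrI ↦ hr (hIx r hrI)
  rw [← one_smul R x, ← hbc, add_smul, hIx c hc, add_zero, mul_smul]
  exact N.smul_mem b hrN

theorem IsEssential.surjective_of_injective {R : Type u} [CommRing R] {M N : Type u}
    [AddCommGroup M] [Module R M] [AddCommGroup N] [Module R N] [Module.Injective R M]
    {f : M →ₗ[R] N} (hf : Function.Injective f) (hN : IsEssential (LinearMap.range f)) :
    Function.Surjective f := fun y ↦ by
  obtain ⟨g, hg⟩ := Module.Injective.out f hf LinearMap.id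
  have hker : LinearMap.ker g = ⊥ := by
    by_contra hne
    refine hN.inf_ne_bot hne ((Submodule.eq_bot_iff _).mpr ?_)
    rintro _ ⟨hx, x, rfl⟩
    rw [show x = 0 from (hg x).symm.trans hx, map_zero]
  exact ⟨g y, LinearMap.ker_eq_bot.mp hker (hg (g y))⟩

/- The injective hull of the residue field, taken once for each element of a basis of the socle of
`M`, maps isomorphically onto `M`. -/
theorem IsPowerTorsion.exists_linearEquiv_finsupp {R : Type u} [CommRing R] [IsNoetherianRing R]
    {m : Ideal R} [m.IsMaximal] {M E : Type u} [AddCommGroup M] [Module R M] [AddCommGroup E]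
    [Module R E] [Module.Injective R M] [Module.Injective R E] (hM : IsPowerTorsion m M)
    (hE : IsPowerTorsion m E) {j : R ⧸ m →ₗ[R] E} (hj : Function.Injective j)
    (hjE : IsEssential (LinearMap.range j)) : ∃ ι : Type u, Nonempty (M ≃ₗ[R] (ι →₀ E)) := by
  let _ : Field (R ⧸ m) := Ideal.Quotient.field m
  let b := Module.Basis.ofVectorSpace (R ⧸ m) (Submodule.torsionBySet R M m)
  set ι := Module.Basis.ofVectorSpaceIndex (R ⧸ m) (Submodule.torsionBySet R M m)
  let e := b.repr.restrictScalars R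
  let J : (ι →₀ R ⧸ m) →ₗ[R] ι →₀ E := Finsupp.mapRange.linearMap j
  have hJ : Function.Injective J := Finsupp.mapRange_injective j (map_zero j) hj
  obtain ⟨g, hg⟩ := Module.Injective.out J hJ (Submodule.subtype _ ∘ₗ e.symm.toLinearMap)
  have hgi : Function.Injective g := by
    refine (hE.finsupp ι).injective_of_torsionBySet fun z hz hgz ↦ ?_
    obtain ⟨c, rfl⟩ : z ∈ LinearMap.range J := by
      rw [Finsupp.range_mapRange_linearMap j (LinearMap.ker_eq_bot.mpr hj)]
      exact fun i ↦ hjE.torsionBySet_le ((Submodule.mem_torsionBySet_iff _ _).mpr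
        fun s ↦ DFunLike.congr_fun (hz s s.2) i)
    have hc : e.symm c = 0 := Subtype.ext ((hg c).symm.trans hgz)
    rw [(map_eq_zero_iff _ e.symm.injective).mp hc, map_zero]
  have hgr : IsEssential (LinearMap.range g) :=
    hM.isEssential_of_torsionBySet_le fun x hx ↦ ⟨J (e ⟨x, hx⟩), by
      rw [hg, LinearMap.comp_apply, LinearEquiv.coe_coe, e.symm_apply_apply,
        Submodule.subtype_apply]⟩
  have := injective_finsupp (R := R) ι E
  exact ⟨ι, ⟨(LinearEquiv.ofBijective g ⟨hgi, hgr.surjective_of_injective hgi⟩).symm⟩⟩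

end TorsionInjectiveDecomposition

section MaximalIdealHull

theorem IsPowerTorsion.isFiniteLength_of_isMaximal {R M : Type*} [CommRing R]
    [IsNoetherianRing R] {m : Ideal R} [m.IsMaximal] [AddCommGroup M] [Module R M]
    [Module.Finite R M] (hM : IsPowerTorsion m M) : IsFiniteLength R M := by
  obtain ⟨t, ht⟩ := hM.exists_pow_le_annihilator
  refine isFiniteLength_of_forall_isMaximal fun q hq hann ↦ ?_
  rw [← Ideal.IsMaximal.eq_of_le ‹_› hq.ne_top (hq.le_of_pow_le (ht.trans hann))]
  infer_instance

namespace IsTorsionExtUniversal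

variable {R : Type u} [CommRing R] [IsRegularLocalRing R] {n : ℕ} {H : Type u} [AddCommGroup H]
  [Module R H] {ε : ExtOf R H R n} (hn : ringKrullDim R = n)
  (hε : IsTorsionExtUniversal (maximalIdeal R) ε)

include hn hε

theorem injective_of_maximalIdeal : Module.Injective R H := by
  refine hε.isPowerTorsion.injective_of_forall_exists_extension fun s ↦
    ⟨maximalIdeal R ^ s, le_rfl, fun A f ↦ ?_⟩
  have hB := IsPowerTorsion.quotient_pow (maximalIdeal R) s
  have hC := hB.of_surjective _ A.mkQ_surjective
  have hC0 : Subsingleton (ExtOf R ((R ⧸ maximalIdeal R ^ s) ⧸ A) R (n + 1)) :=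
    ext_subsingleton_of_isFiniteLength hn hC.isFiniteLength_of_isMaximal n.succ_ne_self
  obtain ⟨z, hz⟩ := ExtOf.precomp_surjective A.injective_subtype A.mkQ_surjective
    (LinearMap.exact_subtype_mkQ A) hC0 (ExtOf.pullback A ε f)
  obtain ⟨g, rfl⟩ := (hε.bijective_pullback _ hB).2 z
  rw [← ExtOf.pullback_comp] at hz
  exact ⟨g, LinearMap.congr_fun
    ((hε.bijective_pullback _ (hB.of_injective _ A.injective_subtype)).1 hz)⟩

theorem exists_isEssential_range : ∃ j : R ⧸ maximalIdeal R →ₗ[R] H,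
    Function.Injective j ∧ IsEssential (LinearMap.range j) := by
  have hk := IsPowerTorsion.quotient (maximalIdeal R)
  have : IsSimpleModule R (R ⧸ maximalIdeal R) := isSimpleModule_iff_isCoatom.mpr
    (Ideal.isMaximal_def.mp inferInstance)
  have : IsSimpleModule R (R ⧸ maximalIdeal R →ₗ[R] H) := by
    rw [← Module.length_eq_one_iff, (LinearEquiv.ofBijective (ExtOf.pullback _ ε)
      (hε.bijective_pullback _ hk)).length_eq, length_ext_of_isFiniteLength hn
      hk.isFiniteLength_of_isMaximal, Module.length_eq_one_iff]
    infer_instance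
  have := IsSimpleModule.nontrivial R (R ⧸ maximalIdeal R →ₗ[R] H)
  obtain ⟨j, hj⟩ := exists_ne (0 : R ⧸ maximalIdeal R →ₗ[R] H)
  refine ⟨j, LinearMap.injective_of_ne_zero hj,
    hε.isPowerTorsion.isEssential_of_torsionBySet_le fun x hx ↦ ?_⟩
  let f : R ⧸ maximalIdeal R →ₗ[R] H :=
    (maximalIdeal R).liftQ (LinearMap.toSpanSingleton R H x) fun s hs ↦
      (Submodule.mem_torsionBySet_iff _ _).mp hx ⟨s, hs⟩
  obtain ⟨r, hr⟩ := IsSimpleModule.toSpanSingleton_surjective R hj f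
  refine ⟨r • 1, ?_⟩
  rw [map_smul]
  exact (LinearMap.congr_fun hr 1).trans (one_smul R x)

end IsTorsionExtUniversal

end MaximalIdealHull

section DerivedExt

theorem exists_linearEquiv_of_ker_eq {R M A B : Type*} [Ring R] [AddCommGroup M] [Module R M]
    [AddCommGroup A] [Module R A] [AddCommGroup B] [Module R B] {f : M →ₗ[R] A} {g : M →ₗ[R] B}
    (hf : Function.Surjective f) (hg : Function.Surjective g)
    (h : LinearMap.ker f = LinearMap.ker g) : ∃ e : A ≃ₗ[R] B, ∀ z, e (f z) = g z := by
  refine ⟨(f.quotKerEquivOfSurjective hf).symm ≪≫ₗ Submodule.quotEquivOfEq _ _ h ≪≫ₗ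
    g.quotKerEquivOfSurjective hg, fun z ↦ ?_⟩
  have hz : (f.quotKerEquivOfSurjective hf).symm (f z) = Submodule.Quotient.mk z :=
    (LinearEquiv.symm_apply_eq _).mpr rfl
  rw [LinearEquiv.trans_apply, LinearEquiv.trans_apply, hz]
  rfl

theorem homologyπ_eq_zero_iff {R ι : Type*} [Ring R] {c : ComplexShape ι}
    (K : HomologicalComplex (ModuleCat R) c) (i : ι) (z : K.cycles i) :
    (K.homologyπ i).hom z = 0 ↔
      ∃ w : K.X (c.prev i), (K.d (c.prev i) i).hom w = (K.iCycles i).hom z := by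
  have hex : (ShortComplex.mk (K.toCycles (c.prev i) i) (K.homologyπ i)
      (K.toCycles_comp_homologyπ _ i)).Exact :=
    ShortComplex.exact_of_g_is_cokernel _ (K.homologyIsCokernel _ i rfl)
  have hi : Function.Injective (K.iCycles i).hom :=
    (ModuleCat.mono_iff_injective _).mp inferInstance
  have hto (w) : (K.iCycles i).hom ((K.toCycles (c.prev i) i).hom w) = (K.d _ i).hom w := by
    rw [← K.toCycles_i (c.prev i) i, ModuleCat.hom_comp, LinearMap.comp_apply]
  refine ((ShortComplex.ShortExact.moduleCat_exact_iff_function_exact _).mp hex z).trans ?_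
  exact exists_congr fun w ↦ by rw [← hto, hi.eq_iff]

universe v w

variable {R : Type*} [CommRing R] {C : Type*} [Category.{v} C] [Abelian C] [Linear R C]

/-- The map of complexes `Hom(Q, Y) → Hom(P, Y)` induced by a map of complexes `φ : P → Q`. -/
def linearYonedaMap {P Q : ChainComplex C ℕ} (φ : P ⟶ Q) (Y : C) :
    Q.linearYonedaObj R Y ⟶ P.linearYonedaObj R Y :=
  (HomologicalComplex.unopFunctor _ _).map
    ((((linearYoneda R C).obj Y).rightOp.mapHomologicalComplex _).map φ).op

section

variable [EnoughProjectives C]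

theorem isoExt_naturality {X X' : C} {g : X' ⟶ X} {P : ProjectiveResolution X}
    {P' : ProjectiveResolution X'} (φ : ProjectiveResolution.Hom P' P g) (Y : C) (n : ℕ) :
    ((Ext R C n).map g.op).app Y ≫ (P'.isoExt n Y).hom =
      (P.isoExt n Y).hom ≫ HomologicalComplex.homologyMap (linearYonedaMap φ.hom Y) n := by
  have hderived : CommSq (P.isoLeftDerivedObj ((linearYoneda R C).obj Y).rightOp n).inv.unop
      (((Ext R C n).map g.op).app Y)
      (HomologicalComplex.homologyMap ((HomologicalComplex.opFunctor _ _).map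
        (linearYonedaMap φ.hom Y).op) n).unop
      (P'.isoLeftDerivedObj ((linearYoneda R C).obj Y).rightOp n).inv.unop :=
    ⟨(congrArg Quiver.Hom.unop (ProjectiveResolution.isoLeftDerivedObj_inv_naturality g P' P φ.hom
      (φ.hom_f_zero_comp_π_f_zero.trans (by simp)) ((linearYoneda R C).obj Y).rightOp n)).symm⟩
  have hop := CommSq.horiz_inv
    ⟨(HomologicalComplex.homologyOp_hom_naturality (linearYonedaMap (R := R) φ.hom Y) n).symm⟩
  exact (hderived.horiz_comp hop.unop).w.symm

end

variable {X Y : C} (P : ProjectiveResolution X)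

variable (R Y) in
/-- The inclusion of the `n`-cocycles of `Hom(P, Y)` into `Hom(P_n, Y)`. -/
def cyclesToHom (n : ℕ) :
    (P.complex.linearYonedaObj R Y).cycles n →ₗ[R] (P.complex.X n ⟶ Y) :=
  ((P.complex.linearYonedaObj R Y).iCycles n).hom

theorem d_comp_cyclesToHom (n : ℕ) (z : (P.complex.linearYonedaObj R Y).cycles n) :
    P.complex.d (n + 1) n ≫ cyclesToHom R Y P n z = 0 :=
  congrArg (fun q ↦ q.hom z) ((P.complex.linearYonedaObj R Y).iCycles_d n (n + 1))

theorem cyclesToHom_cyclesMap {X' : C} {P : ProjectiveResolution X} {P' : ProjectiveResolution X'}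
    (φ : P'.complex ⟶ P.complex) (n : ℕ) (z : (P.complex.linearYonedaObj R Y).cycles n) :
    cyclesToHom R Y P' n ((HomologicalComplex.cyclesMap (linearYonedaMap φ Y) n).hom z) =
      φ.f n ≫ cyclesToHom R Y P n z :=
  congrArg (fun q ↦ q.hom z) (HomologicalComplex.cyclesMap_i (linearYonedaMap φ Y) n)

section

variable [EnoughProjectives C]

variable (R Y) in
/-- The class in the derived functor `Ext` of an `n`-cocycle of `Hom(P, Y)`, for a projective
resolution `P` of `X`. -/
def cyclesToDerivedExt (n : ℕ) :
    (P.complex.linearYonedaObj R Y).cycles n →ₗ[R] ((Ext R C n).obj (op X)).obj Y :=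
  ((P.complex.linearYonedaObj R Y).homologyπ n ≫ (P.isoExt n Y).inv).hom

theorem cyclesToDerivedExt_surjective (n : ℕ) : Function.Surjective (cyclesToDerivedExt R Y P n) :=
  (ModuleCat.epi_iff_surjective ((P.complex.linearYonedaObj R Y).homologyπ n ≫
    (P.isoExt n Y).inv)).mp inferInstance

theorem ker_cyclesToDerivedExt (n : ℕ) : LinearMap.ker (cyclesToDerivedExt R Y P n) =
    LinearMap.ker ((P.complex.linearYonedaObj R Y).homologyπ n).hom :=
  LinearMap.ker_comp_of_ker_eq_bot _ (P.isoExt n Y).symm.toLinearEquiv.ker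

theorem cyclesToDerivedExt_cyclesMap {X' : C} {P : ProjectiveResolution X}
    {P' : ProjectiveResolution X'} {g : X' ⟶ X} (φ : ProjectiveResolution.Hom P' P g) (n : ℕ)
    (z : (P.complex.linearYonedaObj R Y).cycles n) :
    cyclesToDerivedExt R Y P' n
        ((HomologicalComplex.cyclesMap (linearYonedaMap φ.hom Y) n).hom z) =
      (((Ext R C n).map g.op).app Y).hom (cyclesToDerivedExt R Y P n z) := by
  have hπ := CommSq.mk
    (HomologicalComplex.homologyπ_naturality (linearYonedaMap (R := R) φ.hom Y) n)
  have hiso := CommSq.horiz_inv ⟨(isoExt_naturality (R := R) φ Y n).symm⟩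
  exact congrArg (fun q ↦ q.hom z) (hπ.horiz_comp hiso).w.symm

end

variable [HasExt.{w} C]

theorem extMk_degree_zero_eq_zero_iff (f : P.complex.X 0 ⟶ Y) (hf : P.complex.d 1 0 ≫ f = 0) :
    P.extMk f 1 rfl hf = 0 ↔ f = 0 := by
  refine ⟨fun h ↦ ?_, ?_⟩
  · rw [← P.extEquivCohomologyClass.apply_eq_iff_eq, P.extEquivCohomologyClass_extMk,
      P.extEquivCohomologyClass_zero, CochainComplex.HomComplex.CohomologyClass.mk_eq_zero_iff,
      CochainComplex.HomComplex.Cocycle.toSingleMk_mem_coboundaries_iff _ _ _ _ _ 1 (by simp)] at h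
    obtain ⟨g, hg⟩ := h
    rw [← cancel_epi (P.cochainComplexXIso (-((0 : ℕ) : ℤ)) 0 rfl).hom, ← hg, Limits.comp_zero,
      (P.cochainComplex.isZero_of_isStrictlyLE 0 1 (by simp)).eq_of_src g 0, Limits.comp_zero]
  · rintro rfl
    exact P.extMk_zero 1 rfl

theorem extMk_eq_zero_iff_exists_prev (n : ℕ) (f : P.complex.X n ⟶ Y)
    (hf : P.complex.d (n + 1) n ≫ f = 0) :
    P.extMk f (n + 1) rfl hf = 0 ↔ ∃ g, P.complex.d n ((ComplexShape.up ℕ).prev n) ≫ g = f := by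
  cases n with
  | zero =>
    rw [extMk_degree_zero_eq_zero_iff, P.complex.shape 0 _ (by simp)]
    simp only [Limits.zero_comp, exists_const, eq_comm]
  | succ n =>
    rw [CochainComplex.prev_nat_succ]
    exact P.extMk_eq_zero_iff f _ rfl hf n rfl

theorem extMk_smul (r : R) {n : ℕ} (f : P.complex.X n ⟶ Y)
    (hf : P.complex.d (n + 1) n ≫ f = 0) :
    P.extMk (r • f) (n + 1) rfl (by rw [Linear.comp_smul, hf, smul_zero]) =
      r • P.extMk f (n + 1) rfl hf := by
  have h := P.extMk_comp_mk₀ f (n + 1) rfl hf (r • 𝟙 Y)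
  rw [Abelian.Ext.mk₀_smul, Abelian.Ext.comp_smul, Abelian.Ext.comp_mk₀_id] at h
  simpa only [Linear.comp_smul, Category.comp_id] using h.symm

variable (R Y) in
/-- The class in `Ext^n(X, Y)` of an `n`-cocycle of `Hom(P, Y)`, for a projective resolution `P`
of `X`. -/
def cyclesToExt (n : ℕ) :
    (P.complex.linearYonedaObj R Y).cycles n →ₗ[R] Abelian.Ext X Y n where
  toFun z := P.extMk (cyclesToHom R Y P n z) (n + 1) rfl (d_comp_cyclesToHom P n z)
  map_add' z w := by
    simp only [ProjectiveResolution.add_extMk, map_add]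
  map_smul' r z := by
    simp only [RingHom.id_apply, ← extMk_smul, map_smul]

theorem cyclesToExt_surjective (n : ℕ) : Function.Surjective (cyclesToExt R Y P n) := fun c ↦ by
  obtain ⟨f, hf, rfl⟩ := P.extMk_surjective c (n + 1) rfl
  let K := P.complex.linearYonedaObj R Y
  have hex : (ShortComplex.mk (K.iCycles n) (K.d n (n + 1)) (K.iCycles_d n (n + 1))).Exact :=
    ShortComplex.exact_of_f_is_kernel _ (K.cyclesIsKernel n (n + 1) (by simp))
  obtain ⟨z, rfl⟩ := (ShortComplex.moduleCat_exact_iff _).mp hex f hf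
  exact ⟨z, rfl⟩

theorem ker_cyclesToExt (n : ℕ) : LinearMap.ker (cyclesToExt R Y P n) =
    LinearMap.ker ((P.complex.linearYonedaObj R Y).homologyπ n).hom := by
  ext z
  rw [LinearMap.mem_ker, LinearMap.mem_ker, homologyπ_eq_zero_iff]
  exact extMk_eq_zero_iff_exists_prev P n _ (d_comp_cyclesToHom P n z)

theorem cyclesToExt_cyclesMap {X' : C} {P : ProjectiveResolution X} {P' : ProjectiveResolution X'}
    {g : X' ⟶ X} (φ : ProjectiveResolution.Hom P' P g) (n : ℕ)
    (z : (P.complex.linearYonedaObj R Y).cycles n) :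
    cyclesToExt R Y P' n ((HomologicalComplex.cyclesMap (linearYonedaMap φ.hom Y) n).hom z) =
      (Abelian.Ext.mk₀ g).comp (cyclesToExt R Y P n z) (zero_add n) := by
  simp only [cyclesToExt, LinearMap.coe_mk, AddHom.coe_mk, cyclesToHom_cyclesMap]
  exact (ProjectiveResolution.mk₀_comp_extMk _ (n + 1) rfl (d_comp_cyclesToHom P n z) φ).symm

variable [EnoughProjectives C]

theorem exists_linearEquiv_cyclesToDerivedExt (n : ℕ) :
    ∃ e : ((Ext R C n).obj (op X)).obj Y ≃ₗ[R] Abelian.Ext X Y n,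
      ∀ z, e (cyclesToDerivedExt R Y P n z) = cyclesToExt R Y P n z :=
  exists_linearEquiv_of_ker_eq (cyclesToDerivedExt_surjective P n) (cyclesToExt_surjective P n)
    ((ker_cyclesToDerivedExt P n).trans (ker_cyclesToExt P n).symm)

variable (R) in
/-- The comparison of the left derived functor `Ext` of `Hom(-, Y)` with Yoneda `Ext`. -/
def derivedExtEquiv (X Y : C) (n : ℕ) :
    ((Ext R C n).obj (op X)).obj Y ≃ₗ[R] Abelian.Ext X Y n :=
  (exists_linearEquiv_cyclesToDerivedExt (projectiveResolution X) n).choose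

theorem derivedExtEquiv_cyclesToDerivedExt (n : ℕ)
    (z : ((projectiveResolution X).complex.linearYonedaObj R Y).cycles n) :
    derivedExtEquiv R X Y n (cyclesToDerivedExt R Y (projectiveResolution X) n z) =
      cyclesToExt R Y (projectiveResolution X) n z :=
  (exists_linearEquiv_cyclesToDerivedExt (projectiveResolution X) n).choose_spec z

theorem derivedExtEquiv_map {X' : C} (g : X' ⟶ X) (n : ℕ)
    (c : ((Ext R C n).obj (op X)).obj Y) :
    derivedExtEquiv R X' Y n ((((Ext R C n).map g.op).app Y).hom c) =
      (Abelian.Ext.mk₀ g).comp (derivedExtEquiv R X Y n c) (zero_add n) := by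
  let P := projectiveResolution X
  let P' := projectiveResolution X'
  let φ : ProjectiveResolution.Hom P' P g :=
    { hom := ProjectiveResolution.lift g P' P
      hom_f_zero_comp_π_f_zero :=
        (ProjectiveResolution.lift_commutes_zero g P' P).trans (by simp) }
  obtain ⟨z, rfl⟩ := cyclesToDerivedExt_surjective P n c
  rw [← cyclesToDerivedExt_cyclesMap φ, derivedExtEquiv_cyclesToDerivedExt,
    derivedExtEquiv_cyclesToDerivedExt, cyclesToExt_cyclesMap φ]

end DerivedExt

section LocalCohomology

theorem bijective_desc_hom {R : Type*} [Ring R] {J : Type*} [Category J] {F : J ⥤ ModuleCat R}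
    [Limits.PreservesColimit F (forget (ModuleCat R))] {c : Limits.Cocone F}
    (hc : Limits.IsColimit c) (s : Limits.Cocone F)
    (hinj : ∀ j, Function.Injective (s.ι.app j).hom)
    (hsurj : ∀ x : s.pt, ∃ j y, (s.ι.app j).hom y = x) :
    Function.Bijective (hc.desc s).hom := by
  have hfac (j : J) (y : F.obj j) : (hc.desc s).hom ((c.ι.app j).hom y) = (s.ι.app j).hom y :=
    congrArg (fun q ↦ q.hom y) (hc.fac s j)
  refine ⟨(injective_iff_map_eq_zero _).mpr fun x hx ↦ ?_, fun x ↦ ?_⟩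
  · obtain ⟨j, y, rfl⟩ := Limits.Concrete.isColimit_exists_rep _ hc x
    have hy : y = 0 := hinj j (((hfac j y).symm.trans hx).trans (map_zero _).symm)
    exact hy ▸ map_zero (c.ι.app j).hom
  · obtain ⟨j, y, rfl⟩ := hsurj x
    exact ⟨_, hfac j y⟩

namespace IsTorsionExtUniversal

variable {R : Type u} [CommRing R] {I : Ideal R} {H Y : Type u} [AddCommGroup H] [Module R H]
  [AddCommGroup Y] [Module R Y] {i : ℕ} {ε : ExtOf R H Y i} (hε : IsTorsionExtUniversal I ε)

/-- The map `Ext^i(R ⧸ I ^ t, Y) → H` which sends the pullback of `ε` along `f` to `f 1`. -/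
def evalOne (t : ℕ) :
    ((Ext R (ModuleCat R) i).obj (op (ModuleCat.of R (R ⧸ I ^ t)))).obj (ModuleCat.of R Y) →ₗ[R]
      H :=
  LinearMap.applyₗ (Ideal.Quotient.mk (I ^ t) 1) ∘ₗ
    (derivedExtEquiv R (ModuleCat.of R (R ⧸ I ^ t)) (ModuleCat.of R Y) i ≪≫ₗ
      (LinearEquiv.ofBijective (ExtOf.pullback (R ⧸ I ^ t) ε)
        (hε.bijective_pullback _ (.quotient_pow I t))).symm).toLinearMap

theorem evalOne_derivedExtEquiv_symm_pullback (t : ℕ) (f : R ⧸ I ^ t →ₗ[R] H) :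
    hε.evalOne t ((derivedExtEquiv R _ _ i).symm (ExtOf.pullback _ ε f)) =
      f (Ideal.Quotient.mk _ 1) := by
  let e := LinearEquiv.ofBijective (ExtOf.pullback (R ⧸ I ^ t) ε)
    (hε.bijective_pullback _ (.quotient_pow I t))
  have he : e.symm (ExtOf.pullback _ ε f) = f := e.symm_apply_apply f
  simp only [evalOne, LinearMap.comp_apply, LinearEquiv.coe_coe, LinearEquiv.trans_apply,
    LinearEquiv.apply_symm_apply]
  exact LinearMap.congr_fun he _

include hε in
theorem exists_derivedExtEquiv_symm_pullback_eq (t : ℕ)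
    (c : ((Ext R (ModuleCat R) i).obj (op (ModuleCat.of R (R ⧸ I ^ t)))).obj
      (ModuleCat.of R Y)) :
    ∃ f, (derivedExtEquiv R _ _ i).symm (ExtOf.pullback (R ⧸ I ^ t) ε f) = c :=
  ((hε.bijective_pullback _ (.quotient_pow I t)).2 (derivedExtEquiv R _ _ i c)).imp fun _ hf ↦
    (LinearEquiv.symm_apply_eq _).mpr hf

theorem evalOne_map {t t' : ℕ} (g : R ⧸ I ^ t' →ₗ[R] R ⧸ I ^ t)
    (hg : g (Ideal.Quotient.mk _ 1) = Ideal.Quotient.mk _ 1)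
    (c : ((Ext R (ModuleCat R) i).obj (op (ModuleCat.of R (R ⧸ I ^ t)))).obj
      (ModuleCat.of R Y)) :
    hε.evalOne t' ((((Ext R (ModuleCat R) i).map (ModuleCat.ofHom g).op).app _).hom c) =
      hε.evalOne t c := by
  obtain ⟨f, rfl⟩ := hε.exists_derivedExtEquiv_symm_pullback_eq t c
  have hmap : (((Ext R (ModuleCat R) i).map (ModuleCat.ofHom g).op).app _).hom
      ((derivedExtEquiv R _ _ i).symm (ExtOf.pullback _ ε f)) =
        (derivedExtEquiv R _ _ i).symm (ExtOf.pullback _ ε (f ∘ₗ g)) := by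
    rw [LinearEquiv.eq_symm_apply, derivedExtEquiv_map, LinearEquiv.apply_symm_apply,
      ExtOf.pullback_comp, ExtOf.precomp_apply]
  rw [hmap, evalOne_derivedExtEquiv_symm_pullback, evalOne_derivedExtEquiv_symm_pullback,
    LinearMap.comp_apply, hg]

theorem evalOne_injective (t : ℕ) : Function.Injective (hε.evalOne t) := by
  refine (injective_iff_map_eq_zero _).mpr fun c hc ↦ ?_
  obtain ⟨f, rfl⟩ := hε.exists_derivedExtEquiv_symm_pullback_eq t c
  rw [evalOne_derivedExtEquiv_symm_pullback] at hc
  have hf : f = 0 := Submodule.linearMap_qext _ (LinearMap.ext_ring hc)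
  rw [hf, map_zero, map_zero]

theorem exists_evalOne_eq (x : H) : ∃ t c, hε.evalOne t c = x := by
  obtain ⟨t, ht⟩ := hε.isPowerTorsion x
  let f : R ⧸ I ^ t →ₗ[R] H := (I ^ t).liftQ (LinearMap.toSpanSingleton R H x) ht
  exact ⟨t, _, (hε.evalOne_derivedExtEquiv_symm_pullback t f).trans (one_smul R x)⟩

/-- The cocone on `t ↦ Ext^i(R ⧸ I ^ t, Y)`, whose colimit is `H^i_I(Y)`, with vertex `H`. -/
def localCohomologyCocone : Limits.Cocone
    (localCohomology.diagram (localCohomology.idealPowersDiagram I) i ⋙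
      (evaluation (ModuleCat R) (ModuleCat R)).obj (ModuleCat.of R Y)) where
  pt := ModuleCat.of R H
  ι :=
    { app := fun t ↦ ModuleCat.ofHom (hε.evalOne t.unop.unop)
      naturality := fun _ _ _ ↦
        ModuleCat.hom_ext (LinearMap.ext fun c ↦ hε.evalOne_map _ rfl c) }

include hε in
theorem nonempty_localCohomology_linearEquiv :
    Nonempty ((localCohomology I i).obj (ModuleCat.of R Y) ≃ₗ[R] H) := by
  have := localCohomology.hasColimitDiagram (localCohomology.idealPowersDiagram I) i
  have := Limits.preservesSmallestFilteredColimits_of_preservesFilteredColimits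
    (forget (ModuleCat R))
  have hcolim := Limits.isColimitOfPreserves
    ((evaluation (ModuleCat R) (ModuleCat R)).obj (ModuleCat.of R Y))
    (Limits.colimit.isColimit
      (localCohomology.diagram (localCohomology.idealPowersDiagram I) i))
  refine ⟨LinearEquiv.ofBijective (hcolim.desc hε.localCohomologyCocone).hom
    (bijective_desc_hom hcolim hε.localCohomologyCocone (fun t ↦ hε.evalOne_injective _)
      fun x ↦ ?_)⟩
  obtain ⟨t, c, hc⟩ := hε.exists_evalOne_eq x
  exact ⟨op (op t), c, hc⟩

end IsTorsionExtUniversal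

end LocalCohomology

section UniversalLocalCohomology

variable {R : Type u} [CommRing R] {I : Ideal R} {H L Y : Type u} [AddCommGroup H] [Module R H]
  [AddCommGroup L] [Module R L] [AddCommGroup Y] [Module R Y] {i : ℕ}

theorem IsTorsionExtUniversal.of_linearEquiv {ε : ExtOf R H Y i}
    (hε : IsTorsionExtUniversal I ε) (e : L ≃ₗ[R] H) :
    IsTorsionExtUniversal I (ExtOf.precomp Y e.toLinearMap i ε) where
  isPowerTorsion := hε.isPowerTorsion.of_injective e.toLinearMap e.injective
  bijective_pullback X _ _ hX := by
    convert (hε.bijective_pullback X hX).comp (e.congrRight (M := X)).bijective using 1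
    exact funext fun f ↦ (ExtOf.precomp_comp f e.toLinearMap ε).symm
  eq_zero_of_comp_eq_zero X _ _ hX x hx := by
    have hxe : ExtOf.postcomp X e.toLinearMap 1 x = 0 :=
      hε.eq_zero_of_comp_eq_zero X hX _
        ((Abelian.Ext.comp_assoc x _ ε (add_zero 1) (zero_add i) (by lia)).trans hx)
    have hinv : e.symm.toLinearMap ∘ₗ e.toLinearMap = LinearMap.id := e.symm_comp
    rw [← ExtOf.postcomp_id x, ← hinv, ExtOf.postcomp_comp, hxe, map_zero]

theorem exists_isTorsionExtUniversal_localCohomology [IsNoetherianRing R] (I : Ideal R) (i : ℕ)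
    (Y : Type u) [AddCommGroup Y] [Module R Y]
    (hY : ∀ t : ℕ, ∀ j < i, Subsingleton (ExtOf R (R ⧸ I ^ t) Y j)) :
    ∃ ε : ExtOf R ((localCohomology I i).obj (ModuleCat.of R Y)) Y i,
      IsTorsionExtUniversal I ε := by
  obtain ⟨H, _, _, ε, hε⟩ := exists_isTorsionExtUniversal I i Y hY
  obtain ⟨e⟩ := hε.nonempty_localCohomology_linearEquiv
  exact ⟨_, hε.of_linearEquiv e⟩

end UniversalLocalCohomology

section InjectiveDimension

variable {R : Type} [CommRing R] {L E : Type} [AddCommGroup L] [Module R L] [AddCommGroup E]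
  [Module R E]

theorem injDimLE_iff_hasInjectiveDimensionLE {n : ℕ} :
    injDimLE R L n ↔ HasInjectiveDimensionLE (ModuleCat.of R L) n := by
  rw [HasInjectiveDimensionLE, hasInjectiveDimensionLT_iff]
  refine ⟨fun h i hi X x ↦ ?_, fun h X i hi ↦ ?_⟩
  · have := h X i hi
    exact (derivedExtEquiv R X _ i).symm.injective (Subsingleton.elim _ _)
  · have : Subsingleton (Abelian.Ext X (ModuleCat.of R L) i) :=
      subsingleton_of_forall_eq 0 fun x ↦ h i hi x
    exact (derivedExtEquiv R X _ i).injective.subsingleton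

theorem hasInjectiveDimensionLE_one_of_injective (φ : L →ₗ[R] E) (hφ : Function.Injective φ)
    [Module.Injective R E] [Module.Injective R (E ⧸ LinearMap.range φ)] :
    HasInjectiveDimensionLE (ModuleCat.of R L) 1 := by
  have : Injective (ModuleCat.of R E) :=
    (Module.injective_iff_injective_object R E).mp inferInstance
  have : Injective (ModuleCat.of R (E ⧸ LinearMap.range φ)) :=
    (Module.injective_iff_injective_object R _).mp inferInstance
  exact (ExtOf.shortExact hφ (LinearMap.range φ).mkQ_surjective
    (LinearMap.exact_map_mkQ_range φ)).hasInjectiveDimensionLT_X₁ 1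
      (inferInstanceAs (HasInjectiveDimensionLT (ModuleCat.of R (E ⧸ LinearMap.range φ)) 1))
      (inferInstanceAs (HasInjectiveDimensionLT (ModuleCat.of R E) (1 + 1)))

theorem injDim_eq_one_of_injective_quotient_range (φ : L →ₗ[R] E)
    (hφ : Function.Injective φ) [Module.Injective R E]
    [Module.Injective R (E ⧸ LinearMap.range φ)] (hL : ¬ Module.Injective R L) :
    injDim R L = 1 := by
  refine le_antisymm (sInf_le ⟨1, rfl, ?_⟩) (le_sInf ?_)
  · exact injDimLE_iff_hasInjectiveDimensionLE.mpr (hasInjectiveDimensionLE_one_of_injective φ hφ)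
  · rintro _ ⟨m, rfl, hm⟩
    refine Nat.one_le_cast.mpr (Nat.one_le_iff_ne_zero.mpr ?_)
    rintro rfl
    exact hL ((Module.injective_iff_injective_object R L).mpr
      (injective_iff_hasInjectiveDimensionLT_one.mpr (injDimLE_iff_hasInjectiveDimensionLE.mp hm)))

end InjectiveDimension

section BassNumber

theorem surjective_localizedModule_map {R L E : Type*} [CommRing R] [AddCommGroup L] [Module R L]
    [AddCommGroup E] [Module R E] (S : Submonoid R) (φ : L →ₗ[R] E)
    (h : ∀ y, ∃ u ∈ S, u • y ∈ LinearMap.range φ) :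
    Function.Surjective (LocalizedModule.map S φ) := fun z ↦ by
  induction z using LocalizedModule.induction_on with | _ y s
  obtain ⟨u, hu, x, hx⟩ := h y
  refine ⟨LocalizedModule.mk x (⟨u, hu⟩ * s), ?_⟩
  rw [LocalizedModule.map_mk, hx]
  exact LocalizedModule.mk_cancel_common_left ⟨u, hu⟩ s y

theorem injective_localizedModule_of_injective {R L E : Type u} [CommRing R] [IsNoetherianRing R]
    [AddCommGroup L] [Module R L] [AddCommGroup E] [Module R E] [Module.Injective R E]
    (S : Submonoid R) (φ : L →ₗ[R] E) (hφ : Function.Injective φ)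
    (h : ∀ y, ∃ u ∈ S, u • y ∈ LinearMap.range φ) :
    Module.Injective (Localization S) (LocalizedModule S L) := by
  have := Module.injective_of_isLocalizedModule (Rₛ := Localization S) S
    (LocalizedModule.mkLinearMap S E)
  let e := LinearEquiv.ofBijective (LocalizedModule.map S φ)
    ⟨LocalizedModule.map_injective S φ hφ, surjective_localizedModule_map S φ h⟩
  exact injective_of_retract e.toLinearMap e.symm.toLinearMap e.symm_comp

theorem not_bassNumberNonzero_succ {R : Type} [CommRing R] (p : Ideal R) [p.IsPrime] {M : Type}
    [AddCommGroup M] [Module R M]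
    [Module.Injective (Localization.AtPrime p) (LocalizedModule p.primeCompl M)] (j : ℕ) :
    ¬ BassNumberNonzero R p M (j + 1) := by
  have : Subsingleton (ExtOf (Localization.AtPrime p) (ResidueField (Localization.AtPrime p))
    (LocalizedModule p.primeCompl M) (j + 1)) := ExtOf.subsingleton_succ_of_injective j
  exact not_nontrivial_iff_subsingleton.mpr (derivedExtEquiv _ _ _ _).injective.subsingleton

end BassNumber

section PrimeOfHeightOne

theorem idealHeight_eq_height {R : Type} [CommRing R] (p : Ideal R) [hp : p.IsPrime] :
    idealHeight R p = p.height := by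
  refine le_antisymm (sInf_le ⟨⟨p, hp⟩, le_rfl, ?_⟩) (le_sInf ?_)
  · exact (PrimeSpectrum.height_eq_orderHeight ⟨p, hp⟩).symm
  · rintro _ ⟨q, hpq, rfl⟩
    rw [← PrimeSpectrum.height_eq_orderHeight]
    exact Ideal.height_mono hpq

theorem IsRegularLocal.isRegularLocalRing {R : Type} [CommRing R] [IsLocalRing R]
    (h : IsRegularLocal R) : IsRegularLocalRing R := by
  obtain ⟨hnoeth, s, hs, hcard⟩ := h
  refine IsRegularLocalRing.of_spanFinrank_maximalIdeal_le R ?_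
  rw [← hcard, ← hs, Nat.cast_le]
  exact (Submodule.spanFinrank_span_le_ncard_of_finite s.finite_toSet).trans_eq
    (Set.ncard_coe_finset s)

theorem krullDimLE_one_quotient {R : Type*} [CommRing R] {p : Ideal R} [p.IsPrime] {d : ℕ}
    (hd : ringKrullDim R = (d + 1 : ℕ)) (hp : p.height = d) : Ring.KrullDimLE 1 (R ⧸ p) := by
  refine (Ring.krullDimLE_one_iff_of_noZeroDivisors).mpr fun q hq hqp ↦ ?_
  have hmono : StrictMono (Ideal.comap (Ideal.Quotient.mk p)) :=
    (Ideal.orderEmbeddingOfSurjective _ Ideal.Quotient.mk_surjective).strictMono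
  have hpq : p < q.comap (Ideal.Quotient.mk p) := by
    simpa only [← RingHom.ker_eq_comap_bot, Ideal.mk_ker] using hmono (bot_lt_iff_ne_bot.mpr hq)
  obtain ⟨M, hM, hqM⟩ := q.exists_le_maximal hqp.ne_top
  rcases hqM.eq_or_lt with rfl | hlt
  · exact hM
  have := hM.isPrime
  have h₁ := Ideal.height_add_one_le_of_lt_of_isPrime hpq
  have h₂ := Ideal.height_add_one_le_of_lt_of_isPrime (hmono hlt)
  have h₃ := Ideal.height_le_ringKrullDim_of_isPrime (I := M.comap (Ideal.Quotient.mk p))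
  rw [hd] at h₃
  have h₄ : (d + 1 + 1 : ℕ∞) ≤ (d + 1 : ℕ) :=
    hp ▸ (add_le_add_left h₁ 1).trans (h₂.trans (by exact_mod_cast h₃))
  exact absurd (by exact_mod_cast h₄) (Nat.not_succ_le_self (d + 1))

theorem ne_maximalIdeal_of_height {R : Type*} [CommRing R] [IsLocalRing R] {p : Ideal R} {d : ℕ}
    (hd : ringKrullDim R = (d + 1 : ℕ)) (hp : p.height = d) : p ≠ maximalIdeal R := by
  rintro rfl
  have h := maximalIdeal_height_eq_ringKrullDim (R := R)
  rw [hp, hd] at h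
  exact d.succ_ne_self (by exact_mod_cast h.symm)

end PrimeOfHeightOne

section ExactSequence

theorem isInjectiveHull_of_isEssential {R M E : Type} [CommRing R] [AddCommGroup M] [Module R M]
    [AddCommGroup E] [Module R E] [hE : Module.Injective R E] {f : M →ₗ[R] E}
    (hf : Function.Injective f) (h : IsEssential (LinearMap.range f)) : IsInjectiveHull R f :=
  ⟨hE, hf, fun _ hN ↦ h.inf_ne_bot hN⟩

theorem IsPowerTorsion.exists_notMem_smul_eq_zero {R M : Type*} [CommRing R] [AddCommGroup M]
    [Module R M] {I t : Ideal R} [t.IsPrime] (hM : IsPowerTorsion I M) (hIt : ¬ I ≤ t) (y : M) :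
    ∃ u ∉ t, u • y = 0 := by
  obtain ⟨a, haI, hat⟩ := SetLike.not_le_iff_exists.mp hIt
  obtain ⟨k, hk⟩ := hM y
  exact ⟨a ^ k, fun h ↦ hat (‹t.IsPrime›.mem_of_pow_mem k h), hk _ (Ideal.pow_mem_pow haI k)⟩

theorem exists_isInjectiveHull_maximalIdeal_linearEquiv_finsupp {R : Type} [CommRing R]
    [IsRegularLocalRing R] {n : ℕ} (hn : ringKrullDim R = n) {M : Type} [AddCommGroup M]
    [Module R M] [Nontrivial M] [Module.Injective R M]
    (hM : IsPowerTorsion (maximalIdeal R) M) :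
    ∃ (Em : ModuleCat.{0} R) (j : R ⧸ maximalIdeal R →ₗ[R] Em) (s : Type),
      IsInjectiveHull R j ∧ Nonempty s ∧ Nonempty (M ≃ₗ[R] (s →₀ Em)) := by
  obtain ⟨Em, _, _, ε, hε⟩ := exists_isTorsionExtUniversal (maximalIdeal R) n R fun t j hj ↦
    ext_subsingleton_of_isFiniteLength hn
      (IsPowerTorsion.quotient_pow (maximalIdeal R) t).isFiniteLength_of_isMaximal hj.ne
  obtain ⟨j, hj, hjE⟩ := hε.exists_isEssential_range hn
  have := hε.injective_of_maximalIdeal hn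
  obtain ⟨s, ⟨e⟩⟩ := hM.exists_linearEquiv_finsupp hε.isPowerTorsion hj hjE
  refine ⟨ModuleCat.of R Em, j, s, isInjectiveHull_of_isEssential hj hjE, ?_, ⟨e⟩⟩
  by_contra hs
  have := not_nonempty_iff.mp hs
  exact not_subsingleton M e.injective.subsingleton

theorem exists_isTorsionExtUniversal_localCohomology_of_krullDimLE_one {R : Type u} [CommRing R]
    [IsRegularLocalRing R] {p : Ideal R} [p.IsPrime] [Ring.KrullDimLE 1 (R ⧸ p)] {d : ℕ}
    (hd : ringKrullDim R = (d + 1 : ℕ)) (hp : p ≠ maximalIdeal R) :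
    ∃ ε : ExtOf R ((localCohomology p d).obj (ModuleCat.of R R)) R d,
      IsTorsionExtUniversal p ε := by
  obtain ⟨a, ham, hap⟩ := SetLike.exists_of_lt ((le_maximalIdeal_of_isPrime p).lt_of_ne hp)
  exact exists_isTorsionExtUniversal_localCohomology p d R fun t j hj ↦
    ext_subsingleton_of_isPowerTorsion hd (IsPowerTorsion.quotient_pow p t) ham hap
      (Nat.succ_lt_succ hj)

namespace IsTorsionExtUniversal

variable {R : Type} [CommRing R] [IsRegularLocalRing R] {d : ℕ} {p : Ideal R} [p.IsPrime]
  [Ring.KrullDimLE 1 (R ⧸ p)] {H : Type} [AddCommGroup H] [Module R H] {ε : ExtOf R H R d}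
  (hd : ringKrullDim R = (d + 1 : ℕ)) (hε : IsTorsionExtUniversal p ε)
  (hp : p ≠ maximalIdeal R)

include hd hε hp

theorem injDim_eq_one : injDim R H = 1 := by
  let φ := LocalizedModule.mkLinearMap p.primeCompl H
  have := hε.injective_isLocalizedModule hd φ hp
  have := hε.injective_quotient_range hd φ hp
  exact injDim_eq_one_of_injective_quotient_range φ (hε.isLocalizedModule_injective hd φ)
    (hε.not_injective hd hp)

theorem not_bassNumberNonzero_one (t : Ideal R) [t.IsPrime] (ht : t ≠ maximalIdeal R) :
    ¬ BassNumberNonzero R t H 1 := by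
  let φ := LocalizedModule.mkLinearMap p.primeCompl H
  have := hε.injective_isLocalizedModule hd φ hp
  have hmt : ¬ maximalIdeal R ≤ t := fun h ↦ ht ((le_maximalIdeal_of_isPrime t).antisymm h)
  have := injective_localizedModule_of_injective t.primeCompl φ
    (hε.isLocalizedModule_injective hd φ) fun y ↦ by
      obtain ⟨u, hu, huy⟩ := (hε.isPowerTorsion_quotient_range φ).exists_notMem_smul_eq_zero hmt
        ((LinearMap.range φ).mkQ y)
      exact ⟨u, hu, (Submodule.Quotient.mk_eq_zero _).mp huy⟩
  exact not_bassNumberNonzero_succ t 0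

theorem exists_isInjectiveHull_exact : ∃ (E₀ E Em : ModuleCat R) (j : (R ⧸ p) →ₗ[R] E₀)
    (ι : H →ₗ[R] E₀) (π : E₀ →ₗ[R] E) (jm : (R ⧸ maximalIdeal R) →ₗ[R] Em) (s : Type),
    IsInjectiveHull R j ∧ IsInjectiveHull R ι ∧ Function.Surjective π ∧
      LinearMap.ker π = LinearMap.range ι ∧ IsInjectiveHull R jm ∧ Nonempty s ∧
        Nonempty (E ≃ₗ[R] (s →₀ Em)) := by
  let φ := LocalizedModule.mkLinearMap p.primeCompl H
  have hφ := hε.isLocalizedModule_injective hd φ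
  have hφE := isEssential_range_isLocalizedModule p.primeCompl φ
  obtain ⟨w, hw⟩ := hε.exists_linearMap_ne_zero hd hp
  have := hε.injective_isLocalizedModule hd φ hp
  have := hε.injective_quotient_range hd φ hp
  have : Nontrivial (LocalizedModule p.primeCompl H ⧸ LinearMap.range φ) :=
    Submodule.Quotient.nontrivial_iff.mpr fun h ↦
      hε.not_surjective_isLocalizedModule hd φ hp (LinearMap.range_eq_top.mp h)
  obtain ⟨Em, jm, s, hjm, hs, ⟨e⟩⟩ := exists_isInjectiveHull_maximalIdeal_linearEquiv_finsupp hd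
    (hε.isPowerTorsion_quotient_range φ)
  -- The modules in the statement range over independent universes, hence the `ULift`.
  refine ⟨ModuleCat.of R (LocalizedModule p.primeCompl H),
    ModuleCat.of R (ULift (LocalizedModule p.primeCompl H ⧸ LinearMap.range φ)), Em, φ ∘ₗ w, φ,
    ULift.moduleEquiv.symm.toLinearMap ∘ₗ (LinearMap.range φ).mkQ, jm, s,
    isInjectiveHull_of_isEssential (hφ.comp (hε.injective_of_ne_zero hd hw))
      (hφE.range_comp hφ (hε.isEssential_range_of_ne_zero hd hp hw)),
    isInjectiveHull_of_isEssential hφ hφE,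
    ULift.moduleEquiv.symm.surjective.comp (Submodule.mkQ_surjective _), ?_, hjm, hs,
    ⟨ULift.moduleEquiv.trans e⟩⟩
  rw [LinearEquiv.ker_comp, Submodule.ker_mkQ]

end IsTorsionExtUniversal

end ExactSequence

end

theorem stmt16_general (R : Type) [CommRing R] [IsLocalRing R] (hreg : IsRegularLocal R)
    (n : ℕ) (hn : 1 ≤ n) (hdim : ringKrullDim R = (n : WithBot ℕ∞))
    (p : Ideal R) [p.IsPrime] (hp : idealHeight R p = ((n - 1 : ℕ) : ℕ∞)) :
    (∃ (E₀ E Em : ModuleCat R)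
        (j : (R ⧸ p) →ₗ[R] E₀)
        (ι : LocalCohomologyMod R p (n - 1) →ₗ[R] E₀)
        (π : E₀ →ₗ[R] E)
        (jm : (R ⧸ IsLocalRing.maximalIdeal R) →ₗ[R] Em)
        (s : Type),
        IsInjectiveHull R j ∧ IsInjectiveHull R ι ∧
          Function.Surjective π ∧ LinearMap.ker π = LinearMap.range ι ∧
          IsInjectiveHull R jm ∧ Nonempty s ∧ Nonempty (E ≃ₗ[R] (s →₀ Em))) ∧
      injDim R (LocalCohomologyMod R p (n - 1)) = (1 : ℕ∞) ∧
      ∀ (t : Ideal R) (ht : t.IsPrime), t ≠ IsLocalRing.maximalIdeal R →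
        ¬ @BassNumberNonzero R _ t ht (LocalCohomologyMod R p (n - 1)) _ _ 1 := by
  have := hreg.isRegularLocalRing
  obtain ⟨d, rfl⟩ := Nat.exists_eq_add_of_le' hn
  rw [Nat.add_sub_cancel] at hp ⊢
  rw [idealHeight_eq_height] at hp
  have := krullDimLE_one_quotient hdim hp
  have hpm := ne_maximalIdeal_of_height hdim hp
  obtain ⟨ε, hε⟩ := exists_isTorsionExtUniversal_localCohomology_of_krullDimLE_one hdim hpm
  exact ⟨hε.exists_isInjectiveHull_exact hdim hpm, hε.injDim_eq_one hdim hpm,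
    fun t _ ht => hε.not_bassNumberNonzero_one hdim hpm t ht⟩

/-- Regular local ring `(R, m)` of dimension `n ≥ 1` containing a field,
`p` a prime of height `n - 1`.  Then there is a short exact sequence
`0 → H_p^{n-1}(R) → E_R(R/p) → E → 0`, where the middle term is an injective hull of `R/p`,
the first map realizes it as an injective hull of `H_p^{n-1}(R)`, and `E` is a nonzero
direct sum of copies of `E_R(R/m)`; in particular `inj.dim H_p^{n-1}(R) = 1` and
`μ^1(t, H_p^{n-1}(R)) = 0` for every prime `t ≠ m`. -/
theorem stmt16 (R : Type) [CommRing R] [IsLocalRing R]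
    (hreg : IsRegularLocal R) (hfield : ContainsField R)
    (n : ℕ) (hn : 1 ≤ n) (hdim : ringKrullDim R = (n : WithBot ℕ∞))
    (p : Ideal R) [p.IsPrime] (hp : idealHeight R p = ((n - 1 : ℕ) : ℕ∞)) :
    (∃ (E₀ E Em : ModuleCat R)
        (j : (R ⧸ p) →ₗ[R] E₀)
        (ι : LocalCohomologyMod R p (n - 1) →ₗ[R] E₀)
        (π : E₀ →ₗ[R] E)
        (jm : (R ⧸ IsLocalRing.maximalIdeal R) →ₗ[R] Em)
        (s : Type),
        IsInjectiveHull R j ∧ IsInjectiveHull R ι ∧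
          Function.Surjective π ∧ LinearMap.ker π = LinearMap.range ι ∧
          IsInjectiveHull R jm ∧ Nonempty s ∧ Nonempty (E ≃ₗ[R] (s →₀ Em))) ∧
      injDim R (LocalCohomologyMod R p (n - 1)) = (1 : ℕ∞) ∧
      ∀ (t : Ideal R) (ht : t.IsPrime), t ≠ IsLocalRing.maximalIdeal R →
        ¬ @BassNumberNonzero R _ t ht (LocalCohomologyMod R p (n - 1)) _ _ 1 :=
  stmt16_general R hreg n hn hdim p hp
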